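/- arXiv:0805.4125 — 2 statements merged into one kernel-verified Lean document; each statement's English description precedes it below -/
import Mathlib

section
/- Let W ⊂ ℝ^N × ℝ be an open set and let v, h ∈ L¹_loc(W) (with a fixed Borel measurable representative of v) be such that −∂_t v + Δv ≥ h in the sense of distributions on W, i.e., for every nonnegative φ ∈ C_c^∞(W) one has ∫_W v (∂_t φ + Δφ) dx dt ≥ ∫_W h φ dx dt, where Δ denotes the Laplacian in the space variable x ∈ ℝ^N. Then −∂_t v⁺ + Δ v⁺ ≥ χ_{[v ≥ 0]} h in the sense of distributions on W, i.e., for every nonnegative φ ∈ C_c^∞(W), ∫_W v⁺ (∂_t φ + Δφ) dx dt ≥ ∫_W χ_{[v ≥ 0]} h φ dx dt, where v⁺ = max(v, 0) and χ_{[v ≥ 0]} is the indicator function of the set {(x,t) ∈ W : v(x,t) ≥ 0}. -/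
open MeasureTheory Set Filter Topology
open scoped ENNReal NNReal

noncomputable section

/-- Euclidean space `ℝ^N`. -/
abbrev Euc (N : ℕ) : Type := EuclideanSpace ℝ (Fin N)

/-- `ρ(x) = dist(x, ∂Ω)`, realized as the distance from `x` to the complement of `Ω`. -/
def rho {N : ℕ} (Ω : Set (Euc N)) (x : Euc N) : ℝ := Metric.infDist x Ωᶜ

/-- The Laplacian (in the space variable) of `f : ℝ^N → ℝ`. -/
def lap {N : ℕ} (f : Euc N → ℝ) (x : Euc N) : ℝ :=
  ∑ i : Fin N, fderiv ℝ (fun y => fderiv ℝ f y (EuclideanSpace.single i 1)) x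
    (EuclideanSpace.single i 1)

/-- The parabolic cylinder `Q_T = Ω × (0,T)`. -/
def QT {N : ℕ} (Ω : Set (Euc N)) (T : ℝ) : Set (Euc N × ℝ) := Ω ×ˢ Ioo 0 T

/-- `∂_t ζ + Δ ζ` for a function `ζ(x,t)` (curried). -/
def heatAdj {N : ℕ} (ζ : Euc N → ℝ → ℝ) (p : Euc N × ℝ) : ℝ :=
  deriv (ζ p.1) p.2 + lap (fun y => ζ y p.2) p.1

/-- `C^{2,1}` regularity: `ζ`, `∂_t ζ`, `∇_x ζ` and `D²_x ζ` exist and are continuous. -/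
def C21 {N : ℕ} (ζ : Euc N → ℝ → ℝ) : Prop :=
  Continuous (fun p : Euc N × ℝ => ζ p.1 p.2) ∧
  (∀ (x : Euc N) (t : ℝ), DifferentiableAt ℝ (ζ x) t) ∧
  Continuous (fun p : Euc N × ℝ => deriv (ζ p.1) p.2) ∧
  (∀ (t : ℝ) (x : Euc N), DifferentiableAt ℝ (fun y => ζ y t) x) ∧
  Continuous (fun p : Euc N × ℝ => fderiv ℝ (fun y => ζ y p.2) p.1) ∧
  (∀ (t : ℝ) (x : Euc N), DifferentiableAt ℝ (fun y => fderiv ℝ (fun z => ζ z t) y) x) ∧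
  Continuous (fun p : Euc N × ℝ => fderiv ℝ (fun y => fderiv ℝ (fun z => ζ z p.2) y) p.1)

/-- Membership in `C^{2,1}_{ℓ,0}(Q̄_T)` : `C^{2,1}` regularity together with
vanishing on `∂Ω × [0,T] ∪ Ω̄ × {T}`. -/
def TestZero {N : ℕ} (Ω : Set (Euc N)) (T : ℝ) (ζ : Euc N → ℝ → ℝ) : Prop :=
  C21 ζ ∧ (∀ x ∈ frontier Ω, ∀ t ∈ Icc (0:ℝ) T, ζ x t = 0) ∧
  (∀ x ∈ closure Ω, ζ x T = 0)

/-- `g : ℝ → ℝ` continuous, nondecreasing and vanishing on `(-∞,0]`. -/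
def GoodG (g : ℝ → ℝ) : Prop := Continuous g ∧ Monotone g ∧ ∀ r : ℝ, r ≤ 0 → g r = 0

/-- `μ ∈ M¹₊(Ω)` : a positive Radon measure on `Ω` with `∫_Ω ρ dμ < ∞`. -/
def MemM1 {N : ℕ} (Ω : Set (Euc N)) (μ : Measure (Euc N)) : Prop :=
  μ Ωᶜ = 0 ∧ (∀ K : Set (Euc N), K ⊆ Ω → IsCompact K → μ K < ⊤) ∧
  (∫⁻ x, ENNReal.ofReal (rho Ω x) ∂μ) < ⊤

/-- A positive Radon measure on the (open) set `U`. -/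
def RadonOn {N : ℕ} (U : Set (Euc N)) (ν : Measure (Euc N)) : Prop :=
  ν Uᶜ = 0 ∧ ∀ K : Set (Euc N), K ⊆ U → IsCompact K → ν K < ⊤

/-- Weak solution of `(P_μ)` : `∂_t u - Δu + g(u) = 0` in `Q_T`, `u = 0` on
`∂Ω × (0,T)`, `u(·,0) = μ`. -/
def WeakSol {N : ℕ} (Ω : Set (Euc N)) (T : ℝ) (g : ℝ → ℝ) (μ : Measure (Euc N))
    (u : Euc N × ℝ → ℝ) : Prop :=
  IntegrableOn u (QT Ω T) ∧
  IntegrableOn (fun p => g (u p) * rho Ω p.1) (QT Ω T) ∧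
  ∀ ζ : Euc N → ℝ → ℝ, TestZero Ω T ζ →
    (∫ p in QT Ω T,
      (-(u p) * deriv (ζ p.1) p.2 - u p * lap (fun y => ζ y p.2) p.1 + ζ p.1 p.2 * g (u p)))
      = ∫ x, ζ x 0 ∂μ

/-- Weak subsolution of `(P_μ)`. -/
def WeakSubSol {N : ℕ} (Ω : Set (Euc N)) (T : ℝ) (g : ℝ → ℝ) (μ : Measure (Euc N))
    (u : Euc N × ℝ → ℝ) : Prop :=
  IntegrableOn u (QT Ω T) ∧
  IntegrableOn (fun p => g (u p) * rho Ω p.1) (QT Ω T) ∧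
  ∀ ζ : Euc N → ℝ → ℝ, TestZero Ω T ζ → (∀ x t, 0 ≤ ζ x t) →
    (∫ p in QT Ω T,
      (-(u p) * deriv (ζ p.1) p.2 - u p * lap (fun y => ζ y p.2) p.1 + ζ p.1 p.2 * g (u p)))
      ≤ ∫ x, ζ x 0 ∂μ

/-- `μ` is a good measure relative to `g` : `(P_μ)` admits a weak solution. -/
def GoodMeasure {N : ℕ} (Ω : Set (Euc N)) (T : ℝ) (g : ℝ → ℝ) (μ : Measure (Euc N)) : Prop :=
  ∃ u, WeakSol Ω T g μ u

/-- Essential limit of `F(t)` as `t → 0⁺` equals `L`. -/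
def EssLimInit (F : ℝ → ℝ) (L : ℝ) : Prop :=
  Tendsto F ((𝓝[>] (0:ℝ)) ⊓ (ae (volume : Measure ℝ))) (𝓝 L)

/-- Essential limit of `F(t)` as `t → 0⁺` is `+∞`. -/
def EssLimInitTop (F : ℝ → ℝ) : Prop :=
  Tendsto F ((𝓝[>] (0:ℝ)) ⊓ (ae (volume : Measure ℝ))) atTop

/-- `ν` is the initial trace of `u` on `U ⊆ Ω` : for every `φ ∈ C_c(U)`,
`ess lim_{t→0} ∫_Ω u(·,t) φ dx = ∫ φ dν`. -/
def InitTraceOn {N : ℕ} (Ω U : Set (Euc N)) (u : Euc N × ℝ → ℝ) (ν : Measure (Euc N)) : Prop :=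
  ∀ φ : Euc N → ℝ, Continuous φ → HasCompactSupport φ → tsupport φ ⊆ U →
    EssLimInit (fun t => ∫ x in Ω, u (x, t) * φ x) (∫ x, φ x ∂ν)

/-- `μstar` is the reduced measure of `μ` : the largest good measure `≤ μ`. -/
def IsReducedMeasure {N : ℕ} (Ω : Set (Euc N)) (T : ℝ) (g : ℝ → ℝ)
    (μ μstar : Measure (Euc N)) : Prop :=
  MemM1 Ω μstar ∧ μstar ≤ μ ∧ GoodMeasure Ω T g μstar ∧
  ∀ ν : Measure (Euc N), MemM1 Ω ν → GoodMeasure Ω T g ν → ν ≤ μ → ν ≤ μstar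

/-- The `N`-dimensional Hausdorff measure on `ℝ^N`. -/
def hausN {N : ℕ} : Measure (Euc N) := MeasureTheory.Measure.hausdorffMeasure (N : ℝ)

section Kato

set_option linter.unusedSectionVars false

/-- Mollification. -/
def kmoll {G : Type*} [NormedAddCommGroup G] [MeasureSpace G] (f ρ : G → ℝ) (x : G) : ℝ :=
  ∫ q, f q * ρ (x - q)

variable {G : Type*} [NormedAddCommGroup G] [NormedSpace ℝ G] [FiniteDimensional ℝ G]
  [MeasureSpace G] [BorelSpace G] [(volume : Measure G).IsAddHaarMeasure]

lemma kmoll_eq (f ρ : G → ℝ) :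
    kmoll f ρ = MeasureTheory.convolution f ρ (ContinuousLinearMap.lsmul ℝ ℝ) volume := by
  ext x
  rw [convolution_lsmul]
  rfl

lemma kmoll_eq' (f ρ : G → ℝ) :
    kmoll f ρ = MeasureTheory.convolution ρ f (ContinuousLinearMap.lsmul ℝ ℝ) volume := by
  ext x
  rw [convolution_lsmul_swap]
  simp [kmoll, mul_comm]

lemma kmoll_integrable {f ρ : G → ℝ} (hf : Integrable f) (hρ : Integrable ρ) :
    Integrable (kmoll f ρ) := by
  rw [kmoll_eq]
  exact hf.integrable_convolution _ hρ

lemma kmoll_integral {f ρ : G → ℝ} (hf : Integrable f) (hρ : Integrable ρ) :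
    ∫ x, kmoll f ρ x = (∫ x, f x) * ∫ x, ρ x := by
  rw [kmoll_eq, integral_convolution _ hf hρ]
  simp

lemma kmoll_contDiff {f ρ : G → ℝ} (hf : Integrable f) (hρ : ContDiff ℝ (⊤ : ℕ∞) ρ)
    (hc : HasCompactSupport ρ) : ContDiff ℝ (⊤ : ℕ∞) (kmoll f ρ) := by
  rw [kmoll_eq]
  exact hc.contDiff_convolution_right _ hf.locallyIntegrable hρ

lemma kmoll_fderiv {f ρ : G → ℝ} (hf : Integrable f) (hρ : ContDiff ℝ (⊤ : ℕ∞) ρ)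
    (hc : HasCompactSupport ρ) (w : G) (x : G) :
    fderiv ℝ (kmoll f ρ) x w = kmoll f (fun q => fderiv ℝ ρ q w) x := by
  rw [kmoll_eq, kmoll_eq, (hc.hasFDerivAt_convolution_right _ hf.locallyIntegrable
    (hρ.of_le (by simp)) x).fderiv, convolution_precompR_apply _ hf.locallyIntegrable
    (hc.fderiv ℝ) (hρ.continuous_fderiv (by simp))]

lemma kmoll_int_exists {f ρ : G → ℝ} (hf : Integrable f) (hρ : Continuous ρ)
    (hc : HasCompactSupport ρ) (x : G) : Integrable (fun q => f q * ρ (x - q)) :=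
  hc.convolutionExists_right (ContinuousLinearMap.lsmul ℝ ℝ) hf.locallyIntegrable hρ x

/-- L1 convergence for nonnegative functions -/
lemma kmoll_L1_nonneg {f : G → ℝ} (hf : Integrable f) (h0 : ∀ x, 0 ≤ f x)
    {B : ℕ → ContDiffBump (0 : G)} {K : ℝ} (hB : Tendsto (fun i => (B i).rOut) atTop (𝓝 0))
    (hB' : ∀ i, (B i).rOut ≤ K * (B i).rIn) :
    Tendsto (fun n => ∫ x, |kmoll f ((B n).normed volume) x - f x|) atTop (𝓝 0) := by
  have hi : ∀ n, Integrable (kmoll f ((B n).normed volume)) := fun n =>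
    kmoll_integrable hf (B n).integrable_normed
  have hae : ∀ᵐ x, Tendsto (fun n => kmoll f ((B n).normed volume) x) atTop (𝓝 (f x)) := by
    simp_rw [kmoll_eq']
    exact ContDiffBump.ae_convolution_tendsto_right_of_locallyIntegrable hB
      (Eventually.of_forall hB') hf.locallyIntegrable
  have hpos : ∀ n x, 0 ≤ kmoll f ((B n).normed volume) x := fun n x =>
    integral_nonneg fun q => mul_nonneg (h0 q) ((B n).nonneg_normed _)
  have key : ∀ n, ∫ x, |kmoll f ((B n).normed volume) x - f x|
      = 2 * ∫ x, max (f x - kmoll f ((B n).normed volume) x) 0 := by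
    intro n
    have h1 : ∫ x, (f x - kmoll f ((B n).normed volume) x) = 0 := by
      rw [integral_sub hf (hi n), kmoll_integral hf (B n).integrable_normed,
        (B n).integral_normed]
      simp
    have h2 : ∀ x, |kmoll f ((B n).normed volume) x - f x| =
        2 * max (f x - kmoll f ((B n).normed volume) x) 0 -
          (f x - kmoll f ((B n).normed volume) x) := by
      intro x
      rcases le_total (f x) (kmoll f ((B n).normed volume) x) with h | h
      · rw [abs_of_nonneg (by linarith), max_eq_right (by linarith)]; ring
      · rw [abs_of_nonpos (by linarith), max_eq_left (by linarith)]; ring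
    simp_rw [h2]
    have i1 : Integrable (fun x => f x - kmoll f ((B n).normed volume) x) := hf.sub (hi n)
    rw [integral_sub (i1.pos_part.const_mul 2) i1, h1, integral_const_mul]
    simp
  simp_rw [key]
  have : Tendsto (fun n => ∫ x, max (f x - kmoll f ((B n).normed volume) x) 0) atTop
      (𝓝 (∫ x : G, (0:ℝ))) := by
    apply tendsto_integral_of_dominated_convergence f
    · intro n
      exact (hf.sub (hi n)).pos_part.aestronglyMeasurable
    · exact hf
    · intro n
      filter_upwards with x
      rw [Real.norm_of_nonneg (le_max_right _ _)]
      exact max_le (by linarith [hpos n x]) (h0 x)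
    · filter_upwards [hae] with x hx
      have := (tendsto_const_nhds (x := f x)).sub hx |>.max (tendsto_const_nhds (x := (0:ℝ)))
      simpa using this
  simpa using this.const_mul 2

lemma kmoll_L1 {f : G → ℝ} (hf : Integrable f)
    {B : ℕ → ContDiffBump (0 : G)} {K : ℝ} (hB : Tendsto (fun i => (B i).rOut) atTop (𝓝 0))
    (hB' : ∀ i, (B i).rOut ≤ K * (B i).rIn) :
    Tendsto (fun n => ∫ x, |kmoll f ((B n).normed volume) x - f x|) atTop (𝓝 0) := by
  have hp := hf.pos_part
  have hn := hf.neg_part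
  have h1 := kmoll_L1_nonneg hp (fun x => le_max_right _ _) hB hB'
  have h2 := kmoll_L1_nonneg hn (fun x => le_max_right _ _) hB hB'
  have h3 := h1.add h2
  rw [add_zero] at h3
  refine squeeze_zero (fun n => integral_nonneg fun x => abs_nonneg _) (fun n => ?_) h3
  have i1 : Integrable (fun x => |kmoll (fun a => max (f a) 0) ((B n).normed volume) x -
      max (f x) 0|) := ((kmoll_integrable hp (B n).integrable_normed).sub hp).abs
  have i2 : Integrable (fun x => |kmoll (fun a => max (-f a) 0) ((B n).normed volume) x -
      max (-f x) 0|) := ((kmoll_integrable hn (B n).integrable_normed).sub hn).abs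
  rw [← integral_add i1 i2]
  refine integral_mono ((kmoll_integrable hf (B n).integrable_normed).sub hf).abs
    (i1.add i2) fun x => ?_
  have e : kmoll f ((B n).normed volume) x =
      kmoll (fun a => max (f a) 0) ((B n).normed volume) x -
      kmoll (fun a => max (-f a) 0) ((B n).normed volume) x := by
    unfold kmoll
    rw [← integral_sub
      (kmoll_int_exists hp (B n).continuous_normed (B n).hasCompactSupport_normed x)
      (kmoll_int_exists hn (B n).continuous_normed (B n).hasCompactSupport_normed x)]
    congr 1
    ext q
    rw [← sub_mul]
    congr 1
    rcases le_total (f q) 0 with h | h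
    · rw [max_eq_right h, max_eq_left (by linarith)]; ring
    · rw [max_eq_left h, max_eq_right (by linarith)]; ring
  have e' : f x = max (f x) 0 - max (-f x) 0 := by
    rcases le_total (f x) 0 with h | h
    · rw [max_eq_right h, max_eq_left (by linarith)]; ring
    · rw [max_eq_left h, max_eq_right (by linarith)]; ring
  beta_reduce
  rw [e]
  conv_lhs => rw [e']
  rw [sub_sub_sub_comm]
  exact abs_sub _ _

/-- second order operator -/
def kop {N : ℕ} (τ : G) (e : Fin N → G) (u : G → ℝ) (p : G) : ℝ :=
  fderiv ℝ u p τ + ∑ i, fderiv ℝ (fun q => fderiv ℝ u q (e i)) p (e i)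

lemma kD_contDiff {u : G → ℝ} {m n : WithTop ℕ∞} (hu : ContDiff ℝ n u) (h : m + 1 ≤ n) (w : G) :
    ContDiff ℝ m (fun q => fderiv ℝ u q w) :=
  (hu.fderiv_right h).clm_apply contDiff_const

lemma kop_continuous {N : ℕ} (τ : G) (e : Fin N → G) {u : G → ℝ} (hu : ContDiff ℝ 2 u) :
    Continuous (kop τ e u) := by
  unfold kop
  refine (kD_contDiff (m := 0) hu (by norm_num) τ).continuous.add ?_
  refine continuous_finsetSum _ fun i _ => ?_
  exact (kD_contDiff (m := 0) (kD_contDiff (m := 1) hu (by norm_num) _) (by norm_num) _).continuous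

lemma kop_zero {N : ℕ} (τ : G) (e : Fin N → G) {u : G → ℝ} {p : G} (hp : p ∉ tsupport u) :
    kop τ e u p = 0 := by
  have h1 : ∀ q, q ∉ tsupport u → fderiv ℝ u q = 0 := fun q hq => by
    have := fun h => hq (support_fderiv_subset ℝ (f := u) h)
    simpa using this
  unfold kop
  rw [h1 p hp]
  simp only [_root_.zero_apply, zero_add]
  refine Finset.sum_eq_zero fun i _ => ?_
  have : (fun q => fderiv ℝ u q (e i)) =ᶠ[𝓝 p] fun _ => 0 := by
    filter_upwards [(isClosed_tsupport u).isOpen_compl.mem_nhds hp] with q hq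
    rw [h1 q hq]; rfl
  rw [this.fderiv_eq]
  simp

lemma kop_compact {N : ℕ} (τ : G) (e : Fin N → G) {u : G → ℝ} (hu : HasCompactSupport u) :
    HasCompactSupport (kop τ e u) :=
  HasCompactSupport.intro hu fun _ hx => kop_zero τ e hx

lemma kparts1 {u φ : G → ℝ} (hu : ContDiff ℝ 1 u) (hφ : ContDiff ℝ 1 φ)
    (hc : HasCompactSupport φ) (w : G) :
    ∫ x, u x * fderiv ℝ φ x w = - ∫ x, fderiv ℝ u x w * φ x := by
  have c1 := (kD_contDiff (m := 0) hu (by norm_num) w).continuous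
  have c2 := (kD_contDiff (m := 0) hφ (by norm_num) w).continuous
  apply integral_mul_fderiv_eq_neg_fderiv_mul_of_integrable
  · exact (c1.mul hφ.continuous).integrable_of_hasCompactSupport hc.mul_left
  · exact (hu.continuous.mul c2).integrable_of_hasCompactSupport (hc.fderiv_apply ℝ w).mul_left
  · exact (hu.continuous.mul hφ.continuous).integrable_of_hasCompactSupport hc.mul_left
  · exact fun x _ => hu.differentiable (by norm_num) x
  · exact fun x _ => hφ.differentiable (by norm_num) x

lemma kparts {N : ℕ} (τ : G) (e : Fin N → G) {u φ : G → ℝ} (hu : ContDiff ℝ 2 u)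
    (hφ : ContDiff ℝ 2 φ) (hc : HasCompactSupport φ) :
    ∫ x, u x * kop τ e φ x = ∫ x, kop (-τ) e u x * φ x := by
  have cu1 := fun w => kD_contDiff (m := 1) hu (by norm_num) w
  have cφ1 := fun w => kD_contDiff (m := 1) hφ (by norm_num) w
  have cu2 := fun w => (kD_contDiff (m := 0) (cu1 w) (by norm_num) w).continuous
  have cφ2 := fun w => (kD_contDiff (m := 0) (cφ1 w) (by norm_num) w).continuous
  have hu1 : ContDiff ℝ 1 u := hu.of_le (by norm_num)
  have hφ1 : ContDiff ℝ 1 φ := hφ.of_le (by norm_num)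
  have hc1 := fun w => hc.fderiv_apply ℝ w
  unfold kop
  simp_rw [mul_add, add_mul, Finset.mul_sum, Finset.sum_mul]
  have iA : Integrable (fun x => u x * fderiv ℝ φ x τ) :=
    (hu.continuous.mul (cφ1 τ).continuous).integrable_of_hasCompactSupport (hc1 τ).mul_left
  have iB : ∀ i, Integrable (fun x => u x * fderiv ℝ (fun q => fderiv ℝ φ q (e i)) x (e i)) :=
    fun i => (hu.continuous.mul (cφ2 (e i))).integrable_of_hasCompactSupport
      ((hc1 (e i)).fderiv_apply ℝ (e i)).mul_left
  have iC : Integrable (fun x => fderiv ℝ u x (-τ) * φ x) :=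
    ((cu1 (-τ)).continuous.mul hφ.continuous).integrable_of_hasCompactSupport hc.mul_left
  have iD : ∀ i, Integrable (fun x => fderiv ℝ (fun q => fderiv ℝ u q (e i)) x (e i) * φ x) :=
    fun i => ((cu2 (e i)).mul hφ.continuous).integrable_of_hasCompactSupport hc.mul_left
  rw [integral_add iA (integrable_finsetSum _ fun i _ => iB i),
    integral_add iC (integrable_finsetSum _ fun i _ => iD i),
    integral_finsetSum _ fun i _ => iB i, integral_finsetSum _ fun i _ => iD i]
  congr 1
  · rw [kparts1 hu1 hφ1 hc, ← integral_neg]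
    simp
  · refine Finset.sum_congr rfl fun i _ => ?_
    rw [kparts1 hu1 (cφ1 _) (hc1 _), ← neg_eq_iff_eq_neg.mpr (kparts1 (cu1 _) hφ1 hc (e i))]

lemma kop_comp {N : ℕ} (τ : G) (e : Fin N → G) {u : G → ℝ} (hu : ContDiff ℝ 2 u)
    {F F' F'' : ℝ → ℝ} (hF : ∀ r, HasDerivAt F (F' r) r) (hF' : ∀ r, HasDerivAt F' (F'' r) r)
    (h2 : ∀ r, 0 ≤ F'' r) (p : G) :
    F' (u p) * kop τ e u p ≤ kop τ e (fun q => F (u q)) p := by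
  have hu1 : Differentiable ℝ u := hu.differentiable (by norm_num)
  have cu1 := fun w => (kD_contDiff (m := 1) hu (by norm_num) w).differentiable (by norm_num)
  have d1 : ∀ q w, fderiv ℝ (fun q => F (u q)) q w = F' (u q) * fderiv ℝ u q w := fun q w => by
    have := (hF (u q)).comp_hasFDerivAt q (hu1 q).hasFDerivAt
    have e1 := this.fderiv
    simp only [Function.comp_def] at e1
    rw [e1]; simp
  have d2 : ∀ q w, fderiv ℝ (fun q => fderiv ℝ (fun q => F (u q)) q w) q w =
      F' (u q) * fderiv ℝ (fun q => fderiv ℝ u q w) q w + F'' (u q) * (fderiv ℝ u q w)^2 := by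
    intro q w
    simp_rw [d1]
    have h1 := (hF' (u q)).comp_hasFDerivAt q (hu1 q).hasFDerivAt
    have h3 := h1.mul (cu1 w q).hasFDerivAt
    have e1 := h3.fderiv
    simp only [Function.comp_def] at e1
    erw [e1]
    simp
    ring
  unfold kop
  rw [d1]
  simp_rw [d2]
  rw [mul_add, Finset.mul_sum, Finset.sum_add_distrib]
  have : 0 ≤ ∑ i, F'' (u p) * (fderiv ℝ u p (e i))^2 :=
    Finset.sum_nonneg fun i _ => mul_nonneg (h2 _) (sq_nonneg _)
  linarith

lemma kmoll_kop {N : ℕ} (τ : G) (e : Fin N → G) {f ρ : G → ℝ} (hf : Integrable f)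
    (hρ : ContDiff ℝ (⊤ : ℕ∞) ρ) (hc : HasCompactSupport ρ) (p : G) :
    kop τ e (kmoll f ρ) p = kmoll f (kop τ e ρ) p := by
  have c1 := fun w => kD_contDiff (m := (⊤ : ℕ∞)) hρ (by simp) w
  have c2 := fun w => kD_contDiff (m := (⊤ : ℕ∞)) (c1 w) (by simp) w
  have hc1 := fun w => hc.fderiv_apply ℝ w
  unfold kop
  have : ∀ w, (fun q => fderiv ℝ (kmoll f ρ) q w) = kmoll f (fun q => fderiv ℝ ρ q w) := by
    intro w; ext q; exact kmoll_fderiv hf hρ hc w q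
  simp_rw [this]
  rw [kmoll_fderiv hf hρ hc]
  simp_rw [kmoll_fderiv hf (c1 _) (hc1 _)]
  unfold kmoll
  simp_rw [mul_add, Finset.mul_sum]
  have i2 := fun i => kmoll_int_exists hf (c2 (e i)).continuous
    ((hc1 (e i)).fderiv_apply ℝ (e i)) p
  rw [integral_add (kmoll_int_exists hf (c1 τ).continuous (hc1 τ) p)
    (integrable_finsetSum _ fun i _ => i2 i), integral_finsetSum _ fun i _ => i2 i]

lemma kop_refl {N : ℕ} (τ : G) (e : Fin N → G) {ρ : G → ℝ} (hρ : ContDiff ℝ 2 ρ) (p q : G) :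
    kop τ e (fun q => ρ (p - q)) q = kop (-τ) e ρ (p - q) := by
  have d : ∀ (g : G → ℝ), Differentiable ℝ g → ∀ (q w : G),
      fderiv ℝ (fun q => g (p - q)) q w = - fderiv ℝ g (p - q) w := by
    intro g hg q w
    have h1 := (hg (p - q)).hasFDerivAt.comp q ((hasFDerivAt_id q).const_sub p)
    have e1 := h1.fderiv
    simp only [Function.comp_def] at e1
    rw [e1]
    simp
  have hd := fun w => (kD_contDiff (m := 1) hρ (by norm_num) w).differentiable (by norm_num)
  unfold kop
  simp_rw [d ρ (hρ.differentiable (by norm_num))]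
  congr 1
  · simp
  · refine Finset.sum_congr rfl fun i _ => ?_
    have := d (fun x => - fderiv ℝ ρ x (e i)) (hd (e i)).neg q (e i)
    rw [this]
    simp

lemma k2top : (2 : WithTop ℕ∞) ≤ ((⊤ : ℕ∞) : WithTop ℕ∞) := 
  WithTop.coe_le_coe.2 (le_top : (2 : ℕ∞) ≤ ⊤)

lemma kbound {ψ : G → ℝ} (h : Continuous ψ) (hc : HasCompactSupport ψ) :
    ∃ C : ℝ, 0 ≤ C ∧ ∀ x, |ψ x| ≤ C := by
  obtain ⟨C, hC⟩ := hc.exists_bound_of_continuous h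
  exact ⟨max C 0, le_max_right _ _, fun x => (hC x).trans (le_max_left _ _)⟩

lemma kato_F {N : ℕ} (τ : G) (e : Fin N → G) {f h φ : G → ℝ} (hf : Integrable f)
    (hh : Integrable h) (hφ : ContDiff ℝ (⊤ : ℕ∞) φ) (hc : HasCompactSupport φ)
    (h0 : ∀ p, 0 ≤ φ p)
    {B : ℕ → ContDiffBump (0 : G)} {K : ℝ} (hB : Tendsto (fun i => (B i).rOut) atTop (𝓝 0))
    (hB' : ∀ i, (B i).rOut ≤ K * (B i).rIn)
    (hin : ∀ᶠ n in atTop, ∀ p ∈ tsupport φ, kmoll h ((B n).normed volume) p ≤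
      kop (-τ) e (kmoll f ((B n).normed volume)) p)
    {F F' F'' : ℝ → ℝ} (hF : ∀ r, HasDerivAt F (F' r) r) (hF' : ∀ r, HasDerivAt F' (F'' r) r)
    (hF2 : Continuous F'') (h2 : ∀ r, 0 ≤ F'' r) (h1 : ∀ r, 0 ≤ F' r) (h1' : ∀ r, F' r ≤ 1)
    (hF0 : F 0 = 0) :
    ∫ x, F' (f x) * h x * φ x ≤ ∫ x, F (f x) * kop τ e φ x := by
  have cF' : Continuous F' := continuous_iff_continuousAt.2 fun r => (hF' r).continuousAt
  have cF : Continuous F := continuous_iff_continuousAt.2 fun r => (hF r).continuousAt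
  have hF2' : ContDiff ℝ 2 F := by
    have e1 : deriv F = F' := funext fun r => (hF r).deriv
    have e2 : deriv F' = F'' := funext fun r => (hF' r).deriv
    have a1 : ContDiff ℝ 1 F' := by
      rw [contDiff_one_iff_deriv]
      exact ⟨fun r => (hF' r).differentiableAt, by rwa [e2]⟩
    have : ContDiff ℝ (1 + 1) F := by
      rw [contDiff_succ_iff_deriv]
      exact ⟨fun r => (hF r).differentiableAt, by simp, by rwa [e1]⟩
    simpa [one_add_one_eq_two] using this
  have hφ2 : ContDiff ℝ 2 φ := hφ.of_le k2top
  have hL : ∀ a b, |F a - F b| ≤ |a - b| := by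
    intro a b
    have := Convex.norm_image_sub_le_of_norm_hasDerivWithin_le (f := F) (f' := F') (C := 1)
      (s := univ) (x := b) (y := a) (fun r _ => (hF r).hasDerivWithinAt)
      (fun r _ => by rw [Real.norm_of_nonneg (h1 r)]; exact h1' r) convex_univ
      (mem_univ _) (mem_univ _)
    simpa using this
  have hL0 : ∀ a, |F a| ≤ |a| := fun a => by simpa [hF0] using hL a 0
  have hFi : ∀ g : G → ℝ, Integrable g → Integrable (fun x => F (g x)) := fun g hg =>
    hg.mono (cF.comp_aestronglyMeasurable hg.aestronglyMeasurable)
      (Eventually.of_forall fun x => hL0 _)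
  set ρ : ℕ → G → ℝ := fun n => (B n).normed volume with hρ
  have ci : ∀ n, Integrable (kmoll f (ρ n)) := fun n => kmoll_integrable hf (B n).integrable_normed
  have chi : ∀ n, Integrable (kmoll h (ρ n)) := fun n => kmoll_integrable hh (B n).integrable_normed
  have cu : ∀ n, ContDiff ℝ 2 (kmoll f (ρ n)) := fun n =>
    (kmoll_contDiff hf (B n).contDiff_normed (B n).hasCompactSupport_normed).of_le
      k2top
  have ch : ∀ n, Continuous (kmoll h (ρ n)) := fun n =>
    (kmoll_contDiff hh (B n).contDiff_normed (B n).hasCompactSupport_normed).continuous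
  obtain ⟨C, hC0, hC⟩ := kbound hφ.continuous hc
  have cψ := kop_continuous τ e hφ2
  obtain ⟨D, hD0, hD⟩ := kbound cψ (kop_compact τ e hc)
  have iψ : ∀ g : G → ℝ, Integrable g → Integrable (fun x => F (g x) * kop τ e φ x) :=
    fun g hg => (hFi g hg).mul_bdd cψ.aestronglyMeasurable (Eventually.of_forall hD)
  have iφ : ∀ g k : G → ℝ, Integrable g → Integrable k →
      Integrable (fun x => F' (g x) * k x * φ x) := fun g k hg hk =>
    (hk.bdd_mul (c := 1) (cF'.comp_aestronglyMeasurable hg.aestronglyMeasurable)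
      (Eventually.of_forall fun x => by rw [Real.norm_of_nonneg (h1 _)]; exact h1' _)).mul_bdd
      hφ.continuous.aestronglyMeasurable (Eventually.of_forall hC)
  have step : ∀ᶠ n in atTop, ∫ x, F' (kmoll f (ρ n) x) * kmoll h (ρ n) x * φ x ≤
      ∫ x, F (kmoll f (ρ n) x) * kop τ e φ x := by
    filter_upwards [hin] with n hn
    have hcomp : ContDiff ℝ 2 (fun x => F (kmoll f (ρ n) x)) := hF2'.comp (cu n)
    rw [kparts τ e hcomp hφ2 hc]
    refine integral_mono (iφ _ _ (ci n) (chi n)) (((kop_continuous (-τ) e hcomp).mul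
      hφ.continuous).integrable_of_hasCompactSupport hc.mul_left) fun x => ?_
    by_cases hx : x ∈ tsupport φ
    · refine mul_le_mul_of_nonneg_right ?_ (h0 x)
      exact (mul_le_mul_of_nonneg_left (hn x hx) (h1 _)).trans (kop_comp (-τ) e (cu n) hF hF' h2 x)
    · simp [image_eq_zero_of_notMem_tsupport hx]
  have L1f := kmoll_L1 hf hB hB'
  have L1h := kmoll_L1 hh hB hB'
  have hae : ∀ᵐ x, Tendsto (fun n => kmoll f (ρ n) x) atTop (𝓝 (f x)) := by
    simp_rw [kmoll_eq', hρ]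
    exact ContDiffBump.ae_convolution_tendsto_right_of_locallyIntegrable hB
      (Eventually.of_forall hB') hf.locallyIntegrable
  have T1 : Tendsto (fun n => ∫ x, F (kmoll f (ρ n) x) * kop τ e φ x) atTop
      (𝓝 (∫ x, F (f x) * kop τ e φ x)) := by
    rw [tendsto_iff_norm_sub_tendsto_zero]
    have := L1f.const_mul D
    rw [mul_zero] at this
    refine squeeze_zero (fun _ => norm_nonneg _) (fun n => ?_) this
    rw [← integral_sub (iψ _ (ci n)) (iψ _ hf), ← integral_const_mul]
    refine norm_integral_le_of_norm_le (((ci n).sub hf).abs.const_mul D)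
      (Eventually.of_forall fun x => ?_)
    rw [← sub_mul, norm_mul, mul_comm]
    exact mul_le_mul (hD x) (hL _ _) (norm_nonneg _) hD0
  have T2a : Tendsto (fun n => ∫ x, F' (kmoll f (ρ n) x) * (kmoll h (ρ n) x - h x) * φ x) atTop
      (𝓝 0) := by
    rw [tendsto_zero_iff_norm_tendsto_zero]
    have := L1h.const_mul C
    rw [mul_zero] at this
    refine squeeze_zero (fun _ => norm_nonneg _) (fun n => ?_) this
    rw [← integral_const_mul]
    refine norm_integral_le_of_norm_le (((chi n).sub hh).abs.const_mul C)
      (Eventually.of_forall fun x => ?_)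
    rw [norm_mul, mul_comm, norm_mul]
    refine mul_le_mul (hC x) ?_ (by positivity) hC0
    rw [Real.norm_of_nonneg (h1 _)]
    exact mul_le_of_le_one_left (norm_nonneg _) (h1' _)
  have T2b : Tendsto (fun n => ∫ x, F' (kmoll f (ρ n) x) * h x * φ x) atTop
      (𝓝 (∫ x, F' (f x) * h x * φ x)) := by
    apply tendsto_integral_of_dominated_convergence (fun x => |h x| * C)
    · exact fun n => (iφ _ _ (ci n) hh).aestronglyMeasurable
    · exact hh.abs.mul_const C
    · intro n
      filter_upwards with x
      rw [norm_mul, norm_mul]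
      refine mul_le_mul ?_ (hC x) (norm_nonneg _) (abs_nonneg _)
      rw [Real.norm_of_nonneg (h1 _)]
      exact mul_le_of_le_one_left (norm_nonneg _) (h1' _)
    · filter_upwards [hae] with x hx
      exact (((cF'.tendsto _).comp hx).mul_const _).mul_const _
  have T2 : Tendsto (fun n => ∫ x, F' (kmoll f (ρ n) x) * kmoll h (ρ n) x * φ x) atTop
      (𝓝 (∫ x, F' (f x) * h x * φ x)) := by
    have := T2a.add T2b
    rw [zero_add] at this
    refine this.congr fun n => ?_
    rw [← integral_add]
    · congr 1; ext x; ring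
    · exact iφ _ _ (ci n) ((chi n).sub hh)
    · exact iφ _ _ (ci n) hh
  exact le_of_tendsto_of_tendsto T2 T1 step

/-- The convex profile. -/
def kPhi (r : ℝ) : ℝ := ∫ x in (0:ℝ)..r, Real.smoothTransition (x + 1)

lemma kPhi_deriv (r : ℝ) : HasDerivAt kPhi (Real.smoothTransition (r + 1)) r := by
  have hc : Continuous fun x : ℝ => Real.smoothTransition (x + 1) :=
    Real.smoothTransition.continuous.comp (by fun_prop)
  exact intervalIntegral.integral_hasDerivAt_right (hc.intervalIntegrable _ _)
    (hc.stronglyMeasurableAtFilter _ _) hc.continuousAt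

lemma kPhi_pos {r : ℝ} (hr : 0 ≤ r) : kPhi r = r := by
  unfold kPhi
  rw [intervalIntegral.integral_congr (g := fun _ => (1:ℝ))]
  · simp
  · intro x hx
    rw [uIcc_of_le hr] at hx
    exact Real.smoothTransition.one_of_one_le (by linarith [hx.1])

lemma kPhi_neg {r : ℝ} (hr : r ≤ 0) : kPhi r ≤ 0 ∧ -1 ≤ kPhi r := by
  have mono : Monotone kPhi := monotone_of_hasDerivAt_nonneg kPhi_deriv
    fun x => Real.smoothTransition.nonneg _
  have h0 : kPhi 0 = 0 := kPhi_pos le_rfl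
  have hc : Continuous fun x : ℝ => Real.smoothTransition (x + 1) :=
    Real.smoothTransition.continuous.comp (by fun_prop)
  refine ⟨h0 ▸ mono hr, ?_⟩
  have l1 : -1 ≤ kPhi (-1) := by
    have hL := Convex.norm_image_sub_le_of_norm_hasDerivWithin_le (f := kPhi)
      (f' := fun r => Real.smoothTransition (r + 1)) (C := 1)
      (s := univ) (x := 0) (y := -1) (fun r _ => (kPhi_deriv r).hasDerivWithinAt)
      (fun r _ => by
        rw [Real.norm_of_nonneg (Real.smoothTransition.nonneg _)]
        exact Real.smoothTransition.le_one _) convex_univ (mem_univ _) (mem_univ _)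
    rw [h0] at hL
    simp at hL
    linarith [neg_abs_le (kPhi (-1))]
  rcases le_total (-1) r with h | h
  · exact l1.trans (mono h)
  · have : kPhi r = kPhi (-1) := by
      unfold kPhi
      rw [← intervalIntegral.integral_add_adjacent_intervals (b := -1)
        (hc.intervalIntegrable _ _) (hc.intervalIntegrable _ _), add_eq_left]
      rw [intervalIntegral.integral_congr (g := fun _ => (0:ℝ))]
      · simp
      · intro x hx
        rw [uIcc_of_ge h] at hx
        exact Real.smoothTransition.zero_of_nonpos (by linarith [hx.2])
    rw [this]; exact l1

lemma kato_global {N : ℕ} (τ : G) (e : Fin N → G) {f h φ : G → ℝ} (hf : Integrable f)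
    (hh : Integrable h) (hφ : ContDiff ℝ (⊤ : ℕ∞) φ) (hc : HasCompactSupport φ)
    (h0 : ∀ p, 0 ≤ φ p)
    {B : ℕ → ContDiffBump (0 : G)} {K : ℝ} (hB : Tendsto (fun i => (B i).rOut) atTop (𝓝 0))
    (hB' : ∀ i, (B i).rOut ≤ K * (B i).rIn)
    (hin : ∀ᶠ n in atTop, ∀ p ∈ tsupport φ, kmoll h ((B n).normed volume) p ≤
      kop (-τ) e (kmoll f ((B n).normed volume)) p) :
    ∫ x, ({q | 0 ≤ f q}.indicator h x) * φ x ≤ ∫ x, max (f x) 0 * kop τ e φ x := by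
  set S := fun x : ℝ => Real.smoothTransition (x + 1) with hS
  have S0 : ∀ x, 0 ≤ S x := fun x => Real.smoothTransition.nonneg _
  have S1 : ∀ x, S x ≤ 1 := fun x => Real.smoothTransition.le_one _
  have Sc : ContDiff ℝ (⊤ : ℕ∞) S :=
    Real.smoothTransition.contDiff.comp (contDiff_id.add contDiff_const)
  have Sm : Monotone S := fun a b hab => Real.smoothTransition.monotone (by linarith)
  have Sd : ∀ r, HasDerivAt S (deriv S r) r := fun r =>
    (Sc.differentiable (by simp) r).hasDerivAt
  have Sd0 : ∀ r, 0 ≤ deriv S r := fun r => Sm.deriv_nonneg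
  have Sdc : Continuous (deriv S) := Sc.continuous_deriv (by simp)
  have hφ2 : ContDiff ℝ 2 φ := hφ.of_le k2top
  have cψ := kop_continuous τ e hφ2
  obtain ⟨C, hC0, hC⟩ := kbound hφ.continuous hc
  obtain ⟨D, hD0, hD⟩ := kbound cψ (kop_compact τ e hc)
  have P : ∀ r, |kPhi r - max r 0| ≤ 1 := by
    intro r
    rcases le_total 0 r with h | h
    · simp [kPhi_pos h, h]
    · have := kPhi_neg h
      rw [max_eq_right h, sub_zero, abs_le]
      exact ⟨this.2, by linarith [this.1]⟩
  have PL : ∀ r, |kPhi r| ≤ |r| := by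
    intro r
    have hL := Convex.norm_image_sub_le_of_norm_hasDerivWithin_le (f := kPhi)
      (f' := S) (C := 1) (s := univ) (x := 0) (y := r)
      (fun r _ => (kPhi_deriv r).hasDerivWithinAt)
      (fun r _ => by rw [Real.norm_of_nonneg (S0 _)]; exact S1 _)
      convex_univ (mem_univ _) (mem_univ _)
    simpa [kPhi_pos le_rfl] using hL
  have Pc : Continuous kPhi := continuous_iff_continuousAt.2 fun r => (kPhi_deriv r).continuousAt
  have step : ∀ n : ℕ, ∫ x, S (((n:ℝ) + 1) * f x) * h x * φ x ≤
      ∫ x, (kPhi (((n:ℝ) + 1) * f x) / ((n:ℝ) + 1)) * kop τ e φ x := by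
    intro n
    have hn : (0:ℝ) < (n:ℝ) + 1 := by positivity
    have dm : ∀ r : ℝ, HasDerivAt (fun r => ((n:ℝ) + 1) * r) ((n:ℝ) + 1) r := fun r => by
      simpa using (hasDerivAt_id r).const_mul ((n:ℝ) + 1)
    refine kato_F τ e hf hh hφ hc h0 hB hB' hin
      (F := fun r => kPhi (((n:ℝ) + 1) * r) / ((n:ℝ) + 1))
      (F' := fun r => S (((n:ℝ) + 1) * r))
      (F'' := fun r => deriv S (((n:ℝ) + 1) * r) * ((n:ℝ) + 1)) ?_ ?_ ?_ ?_ ?_ ?_ ?_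
    · intro r
      have := ((kPhi_deriv (((n:ℝ) + 1) * r)).comp r (dm r)).div_const ((n:ℝ) + 1)
      rw [mul_div_cancel_right₀ _ hn.ne'] at this
      exact this
    · intro r
      exact (Sd (((n:ℝ) + 1) * r)).comp r (dm r)
    · exact (Sdc.comp (by fun_prop)).mul_const _
    · exact fun r => mul_nonneg (Sd0 _) hn.le
    · exact fun r => S0 _
    · exact fun r => S1 _
    · simp [kPhi_pos le_rfl]
  have hlim : Tendsto (fun n : ℕ => (1:ℝ) / ((n:ℝ) + 1)) atTop (𝓝 0) :=
    tendsto_one_div_add_atTop_nhds_zero_nat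
  have T1 : Tendsto (fun n : ℕ => ∫ x, (kPhi (((n:ℝ) + 1) * f x) / ((n:ℝ) + 1)) * kop τ e φ x)
      atTop (𝓝 (∫ x, max (f x) 0 * kop τ e φ x)) := by
    apply tendsto_integral_of_dominated_convergence (fun x => |f x| * D)
    · intro n
      exact ((Pc.comp_aestronglyMeasurable (hf.aestronglyMeasurable.const_mul _)).mul
        aestronglyMeasurable_const).mul cψ.aestronglyMeasurable
    · exact hf.abs.mul_const D
    · intro n
      have hn : (0:ℝ) < (n:ℝ) + 1 := by positivity
      filter_upwards with x
      rw [norm_mul]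
      refine mul_le_mul ?_ (hD x) (norm_nonneg _) (abs_nonneg _)
      rw [norm_div, Real.norm_of_nonneg hn.le, div_le_iff₀ hn]
      refine (PL _).trans ?_
      rw [abs_mul, abs_of_pos hn, mul_comm]
    · filter_upwards with x
      refine Tendsto.mul_const _ ?_
      rw [tendsto_iff_norm_sub_tendsto_zero]
      refine squeeze_zero (fun _ => norm_nonneg _) (fun n => ?_) hlim
      have hn : (0:ℝ) < (n:ℝ) + 1 := by positivity
      have e1 : max (f x) 0 = max (((n:ℝ) + 1) * f x) 0 / ((n:ℝ) + 1) := by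
        rw [eq_div_iff hn.ne', max_mul_of_nonneg _ _ hn.le]
        simp [mul_comm]
      rw [e1, ← sub_div, norm_div, Real.norm_of_nonneg hn.le]
      exact div_le_div_of_nonneg_right (P _) hn.le
  have T2 : Tendsto (fun n : ℕ => ∫ x, S (((n:ℝ) + 1) * f x) * h x * φ x) atTop
      (𝓝 (∫ x, ({q | 0 ≤ f q}.indicator h x) * φ x)) := by
    apply tendsto_integral_of_dominated_convergence (fun x => |h x| * C)
    · intro n
      exact ((Sc.continuous.comp_aestronglyMeasurable (hf.aestronglyMeasurable.const_mul _)).mul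
        hh.aestronglyMeasurable).mul hφ.continuous.aestronglyMeasurable
    · exact hh.abs.mul_const C
    · intro n
      filter_upwards with x
      rw [norm_mul, norm_mul]
      refine mul_le_mul ?_ (hC x) (norm_nonneg _) (abs_nonneg _)
      rw [Real.norm_of_nonneg (S0 _)]
      exact mul_le_of_le_one_left (norm_nonneg _) (S1 _)
    · filter_upwards with x
      refine Tendsto.mul_const _ ?_
      by_cases hx : 0 ≤ f x
      · rw [indicator_of_mem (show x ∈ {q | 0 ≤ f q} from hx)]
        refine tendsto_const_nhds.congr fun n => ?_
        have : S (((n:ℝ) + 1) * f x) = 1 :=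
          Real.smoothTransition.one_of_one_le (by nlinarith [(Nat.cast_nonneg n : (0:ℝ) ≤ n)])
        rw [this, one_mul]
      · rw [indicator_of_notMem (show x ∉ {q | 0 ≤ f q} from hx)]
        push Not at hx
        refine tendsto_const_nhds.congr' ?_
        obtain ⟨m, hm⟩ := exists_nat_gt (1 / (-f x))
        filter_upwards [eventually_ge_atTop m] with n hn
        have h3 : (m:ℝ) ≤ n := by exact_mod_cast hn
        rw [div_lt_iff₀ (by linarith)] at hm
        have : S (((n:ℝ) + 1) * f x) = 0 :=
          Real.smoothTransition.zero_of_nonpos (by nlinarith)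
        rw [this, zero_mul]
  exact le_of_tendsto_of_tendsto' T2 T1 step

lemma kint {W K : Set G} (hKW : K ⊆ W) {v ψ : G → ℝ}
    (hψ : ∀ x, x ∉ K → ψ x = 0) :
    ∫ p in W, v p * ψ p = ∫ p, K.indicator v p * ψ p := by
  rw [setIntegral_eq_integral_of_forall_compl_eq_zero]
  · congr 1
    ext x
    by_cases hx : x ∈ K
    · rw [indicator_of_mem hx]
    · simp [hψ x hx]
  · intro x hx
    rw [hψ x fun h => hx (hKW h), mul_zero]

end Kato

lemma kHaar (N : ℕ) : (volume : Measure (Euc N × ℝ)).IsAddHaarMeasure := by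
  rw [Measure.volume_eq_prod]; infer_instance

lemma kop_eq {N : ℕ} {φ : Euc N × ℝ → ℝ} (hφ : ContDiff ℝ 2 φ) (p : Euc N × ℝ) :
    deriv (fun s => φ (p.1, s)) p.2 + lap (fun y => φ (y, p.2)) p.1 =
      kop ((0, 1) : Euc N × ℝ) (fun i : Fin N => (EuclideanSpace.single i (1:ℝ), (0:ℝ))) φ p := by
  have d : ∀ (g : Euc N × ℝ → ℝ), Differentiable ℝ g → ∀ (t : ℝ) (x w : Euc N),
      fderiv ℝ (fun y => g (y, t)) x w = fderiv ℝ g (x, t) (w, 0) := by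
    intro g hg t x w
    have h1 := (hg (x, t)).hasFDerivAt.comp (f := fun y => (y, t)) x
      (hasFDerivAt_prodMk_left (𝕜 := ℝ) x t)
    have e1 := h1.fderiv
    simp only [Function.comp_def] at e1
    rw [e1]
    simp
  have := kHaar N
  have hd := fun w => (kD_contDiff (m := 1) hφ (by norm_num) w).differentiable (by norm_num)
  have hφd : Differentiable ℝ φ := hφ.differentiable (by norm_num)
  unfold kop lap
  congr 1
  · have h1 := (hφd (p.1, p.2)).hasFDerivAt.comp_hasDerivAt p.2
      ((hasDerivAt_const p.2 p.1).prodMk (hasDerivAt_id p.2))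
    exact h1.deriv
  · refine Finset.sum_congr rfl fun i _ => ?_
    simp_rw [d φ hφd]
    exact d _ (hd _) p.2 p.1 _

/-- **Parabolic Kato inequality.** If `−∂_t v + Δv ≥ h` in `D'(W)` then
`−∂_t v⁺ + Δ v⁺ ≥ χ_{[v ≥ 0]} h` in `D'(W)`. -/
theorem stmt_0 {N : ℕ} (hN : 1 ≤ N) (W : Set (Euc N × ℝ)) (hW : IsOpen W)
    (v h : Euc N × ℝ → ℝ) (hv_meas : Measurable v)
    (hv : LocallyIntegrableOn v W) (hh : LocallyIntegrableOn h W)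
    (H : ∀ φ : Euc N × ℝ → ℝ, ContDiff ℝ (⊤ : ℕ∞) φ → HasCompactSupport φ →
      tsupport φ ⊆ W → (∀ p, 0 ≤ φ p) →
      (∫ p in W, h p * φ p) ≤
        ∫ p in W, v p * (deriv (fun s => φ (p.1, s)) p.2 + lap (fun y => φ (y, p.2)) p.1)) :
    ∀ φ : Euc N × ℝ → ℝ, ContDiff ℝ (⊤ : ℕ∞) φ → HasCompactSupport φ →
      tsupport φ ⊆ W → (∀ p, 0 ≤ φ p) →
      (∫ p in W, ({q : Euc N × ℝ | 0 ≤ v q}.indicator h) p * φ p) ≤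
        ∫ p in W, max (v p) 0 * (deriv (fun s => φ (p.1, s)) p.2 + lap (fun y => φ (y, p.2)) p.1) := by
  intro φ hφ hc hsupp h0
  have := kHaar N
  have to2 : ∀ {g : Euc N × ℝ → ℝ}, ContDiff ℝ (⊤ : ℕ∞) g → ContDiff ℝ 2 g :=
    fun hg => hg.of_le k2top
  set τ : Euc N × ℝ := (0, 1) with hτ
  set e : Fin N → Euc N × ℝ := fun i => (EuclideanSpace.single i (1:ℝ), (0:ℝ)) with he
  obtain ⟨r, hr, hrW⟩ := hc.isCompact.exists_cthickening_subset_open hW hsupp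
  set K := Metric.cthickening r (tsupport φ) with hK
  have Kc : IsCompact K := hc.isCompact.cthickening
  have Kcl : IsClosed K := Metric.isClosed_cthickening
  have sK : tsupport φ ⊆ K := Metric.self_subset_cthickening _
  have hf : Integrable (K.indicator v) :=
    (hv.integrableOn_compact_subset hrW Kc).integrable_indicator Kcl.measurableSet
  have hh' : Integrable (K.indicator h) :=
    (hh.integrableOn_compact_subset hrW Kc).integrable_indicator Kcl.measurableSet
  let B : ℕ → ContDiffBump (0 : Euc N × ℝ) := fun n =>
    ⟨1 / ((n:ℝ) + 1) / 2, 1 / ((n:ℝ) + 1), by positivity, half_lt_self (by positivity)⟩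
  have hB : Tendsto (fun i => (B i).rOut) atTop (𝓝 0) := tendsto_one_div_add_atTop_nhds_zero_nat
  have hB' : ∀ i, (B i).rOut ≤ 2 * (B i).rIn := fun i => by
    change 1 / ((i:ℝ) + 1) ≤ 2 * (1 / ((i:ℝ) + 1) / 2)
    linarith
  have hin : ∀ᶠ n in atTop, ∀ p ∈ tsupport φ,
      kmoll (K.indicator h) ((B n).normed volume) p ≤
      kop (-τ) e (kmoll (K.indicator v) ((B n).normed volume)) p := by
    filter_upwards [hB.eventually_lt_const hr] with n hn p hp
    set ρ := (B n).normed (volume : Measure (Euc N × ℝ)) with hρ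
    have ρs : ContDiff ℝ (⊤ : ℕ∞) ρ := (B n).contDiff_normed
    have ψs : ContDiff ℝ (⊤ : ℕ∞) (fun q => ρ (p - q)) := ρs.comp (contDiff_const.sub contDiff_id)
    have hsub : tsupport (fun q => ρ (p - q)) ⊆ Metric.closedBall p (B n).rOut := by
      refine closure_minimal (fun q hq => ?_) Metric.isClosed_closedBall
      have : p - q ∈ Function.support ρ := hq
      rw [hρ, (B n).support_normed_eq, mem_ball_zero_iff] at this
      rw [mem_closedBall_iff_norm']
      exact this.le
    have hsubK : tsupport (fun q => ρ (p - q)) ⊆ K :=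
      hsub.trans ((Metric.closedBall_subset_closedBall hn.le).trans
        (Metric.closedBall_subset_cthickening hp r))
    have ψc : HasCompactSupport (fun q => ρ (p - q)) :=
      Kc.of_isClosed_subset (isClosed_tsupport _) hsubK
    have := H _ ψs ψc (hsubK.trans hrW) (fun q => (B n).nonneg_normed _)
    simp_rw [kop_eq (to2 ψs)] at this
    rw [kint hrW (fun x hx => image_eq_zero_of_notMem_tsupport fun h => hx (hsubK h)),
      kint hrW (fun x hx => kop_zero _ _ fun h => hx (hsubK h))] at this
    simp_rw [kop_refl _ _ (to2 ρs)] at this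
    rw [kmoll_kop _ _ hf ρs (B n).hasCompactSupport_normed]
    exact this
  have main := kato_global τ e hf hh' hφ hc h0 hB hB' hin
  simp_rw [kop_eq (to2 hφ)]
  rw [kint (v := {q | 0 ≤ v q}.indicator h) hrW
      (fun x hx => image_eq_zero_of_notMem_tsupport fun h => hx (sK h)),
    kint (v := fun p => max (v p) 0) hrW (fun x hx => kop_zero _ _ fun h => hx (sK h))]
  convert main using 3 with x x
  · by_cases hx : x ∈ K
    · by_cases hvx : 0 ≤ v x <;> simp [indicator, hx, hvx]
    · simp [hx, image_eq_zero_of_notMem_tsupport fun h => hx (sK h)]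
  · by_cases hx : x ∈ K
    · simp only [indicator_of_mem hx]; rfl
    · simp [hx]
end
end

section
/- Let u ∈ L¹(Q_T) be a nonnegative supersolution of the equation ∂_t u − Δu + g(u) = 0 in Q_T such that g∘u ∈ L¹(Q_T). Then there exists a positive Radon measure ν on Ω such that ν is the initial trace of u, i.e., for every φ ∈ C_c(Ω), ess lim_{t→0} ∫_Ω u(·,t) φ dx = ∫_Ω φ dν. -/
open MeasureTheory Set Filter Topology
open scoped ENNReal NNReal

noncomputable section

open scoped Convolution in
theorem bump_step (T : ℝ) (f G : ℝ → ℝ)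
    (hf : IntegrableOn f (Ioo 0 T)) (hG : IntegrableOn G (Ioo 0 T))
    (H : ∀ η : ℝ → ℝ, Differentiable ℝ η → Continuous (deriv η) → HasCompactSupport η →
      tsupport η ⊆ Ioo 0 T → (∀ t, 0 ≤ η t) →
      0 ≤ ∫ t in Ioo 0 T, (-(f t) * deriv η t + G t * η t))
    (b : ContDiffBump (0 : ℝ)) (s t : ℝ) (hst : s ≤ t) (hs : 0 < s - b.rOut)
    (ht : t + b.rOut < T) :
    (b.normed volume ⋆[ContinuousLinearMap.lsmul ℝ ℝ, volume] (indicator (Ioo 0 T) f)) s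
      ≤ (b.normed volume ⋆[ContinuousLinearMap.lsmul ℝ ℝ, volume] (indicator (Ioo 0 T) f)) t
        + ∫ r in Ioo 0 T ∩ Iio (t + b.rOut), |G r| := by
  set ψ : ℝ → ℝ := b.normed volume with hψ
  have ψc : Continuous ψ := b.continuous_normed
  have ψ0 : ∀ x, 0 ≤ ψ x := fun x => b.nonneg_normed x
  have ψi : ∫ x, ψ x = 1 := b.integral_normed
  have ψI : Integrable ψ := b.integrable_normed
  have ψz : ∀ x, b.rOut ≤ |x| → ψ x = 0 := by
    intro x hx
    have : x ∉ Function.support ψ := by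
      rw [hψ, b.support_normed_eq]
      simp [Metric.mem_ball, hx]
    simpa using this
  set η : ℝ → ℝ := fun τ => ∫ r in (s - τ)..(t - τ), ψ r with hη
  have hd : ∀ τ, HasDerivAt η (ψ (s - τ) - ψ (t - τ)) τ := by
    intro τ
    have e : η = fun τ => (∫ r in (0:ℝ)..(t - τ), ψ r) - ∫ r in (0:ℝ)..(s - τ), ψ r := by
      funext τ
      rw [hη, intervalIntegral.integral_interval_sub_left] <;>
        exact ψc.intervalIntegrable _ _
    rw [e]
    have h1 : ∀ a : ℝ, HasDerivAt (fun τ => ∫ r in (0:ℝ)..(a - τ), ψ r) (-ψ (a - τ)) τ := by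
      intro a
      have h2 : HasDerivAt (fun x => ∫ r in (0:ℝ)..x, ψ r) (ψ (a - τ)) (a - τ) :=
        ψc.deriv_integral ψ 0 (a - τ) ▸ (ψc.integral_hasStrictDerivAt 0 (a-τ)).hasDerivAt.differentiableAt.hasDerivAt
      have h3 : HasDerivAt (fun τ : ℝ => a - τ) (-1) τ := (hasDerivAt_id τ).const_sub a
      have h4 := h2.comp τ h3
      rw [mul_neg_one] at h4
      exact h4
    have h5 := (h1 t).sub (h1 s)
    rw [show -ψ (t - τ) - -ψ (s - τ) = ψ (s - τ) - ψ (t - τ) by ring] at h5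
    exact h5
  have hde : deriv η = fun τ => ψ (s - τ) - ψ (t - τ) := funext fun τ => (hd τ).deriv
  have η0 : ∀ τ, 0 ≤ η τ := fun τ =>
    intervalIntegral.integral_nonneg (by linarith) (fun r _ => ψ0 r)
  have η1 : ∀ τ, η τ ≤ 1 := by
    intro τ
    rw [hη, ← ψi]
    simp only
    rw [intervalIntegral.integral_of_le (by linarith)]
    exact setIntegral_le_integral ψI (Eventually.of_forall ψ0)
  have ηz : ∀ τ, τ ∉ Icc (s - b.rOut) (t + b.rOut) → η τ = 0 := by
    intro τ hτ
    have : ∀ r ∈ uIcc (s - τ) (t - τ), ψ r = 0 := by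
      intro r hr
      rw [uIcc_of_le (by linarith)] at hr
      apply ψz
      rw [le_abs]
      by_cases h : s - b.rOut ≤ τ
      · right
        have : ¬ τ ≤ t + b.rOut := fun h' => hτ ⟨h, h'⟩
        linarith [hr.2]
      · left
        linarith [hr.1]
    simp only [hη]
    rw [intervalIntegral.integral_congr this]; simp
  have ηs : tsupport η ⊆ Icc (s - b.rOut) (t + b.rOut) := by
    apply closure_minimal _ isClosed_Icc
    intro τ hτ
    by_contra h
    exact hτ (ηz τ h)
  have ηcont : Continuous η := continuous_iff_continuousAt.2 fun τ => (hd τ).continuousAt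
  have key := H η (fun τ => (hd τ).differentiableAt) (by rw [hde]; fun_prop)
    (HasCompactSupport.of_support_subset_isCompact isCompact_Icc (subset_closure.trans ηs))
    (ηs.trans (fun x hx => ⟨by linarith [hx.1], by linarith [hx.2]⟩)) η0
  obtain ⟨C, hC⟩ : ∃ C, ∀ x, ‖ψ x‖ ≤ C :=
    b.hasCompactSupport_normed.exists_bound_of_continuous ψc
  have I1 : ∀ a, IntegrableOn (fun r => f r * ψ (a - r)) (Ioo 0 T) := fun a =>
    Integrable.mul_bdd hf (by fun_prop : Continuous fun r => ψ (a - r)).aestronglyMeasurable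
      (Eventually.of_forall fun r => hC (a - r))
  have I2 : IntegrableOn (fun r => G r * η r) (Ioo 0 T) :=
    Integrable.mul_bdd (c := 1) hG ηcont.aestronglyMeasurable
      (Eventually.of_forall fun r => by rw [Real.norm_of_nonneg (η0 r)]; exact η1 r)
  have E1 : ∀ a, (ψ ⋆[ContinuousLinearMap.lsmul ℝ ℝ, volume] (indicator (Ioo 0 T) f)) a
      = ∫ r in Ioo 0 T, f r * ψ (a - r) := by
    intro a
    rw [convolution_eq_swap, ← integral_indicator measurableSet_Ioo]
    congr 1; funext r
    by_cases h : r ∈ Ioo 0 T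
    · simp [h, mul_comm]
    · simp [h]
  have E2 : ∫ τ in Ioo 0 T, (-(f τ) * deriv η τ + G τ * η τ)
      = -(∫ r in Ioo 0 T, f r * ψ (s - r)) + (∫ r in Ioo 0 T, f r * ψ (t - r))
        + ∫ r in Ioo 0 T, G r * η r := by
    have J1 : IntegrableOn (fun r => -(f r * ψ (s - r))) (Ioo 0 T) := (I1 s).neg
    have J2 : IntegrableOn (fun r => -(f r * ψ (s - r)) + f r * ψ (t - r)) (Ioo 0 T) :=
      J1.add (I1 t)
    rw [← integral_neg, ← integral_add J1 (I1 t), ← integral_add J2 I2]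
    congr 1; funext r
    simp only [hde]; ring
  have E3 : ∫ r in Ioo 0 T, G r * η r ≤ ∫ r in Ioo 0 T ∩ Iio (t + b.rOut), |G r| := by
    rw [← setIntegral_indicator measurableSet_Iio]
    apply integral_mono I2
    · exact (hG.abs).indicator measurableSet_Iio
    intro r
    by_cases h : r ∈ Iio (t + b.rOut)
    · simp only [h, indicator_of_mem]
      calc G r * η r ≤ |G r| * η r := mul_le_mul_of_nonneg_right (le_abs_self _) (η0 r)
        _ ≤ |G r| * 1 := mul_le_mul_of_nonneg_left (η1 r) (abs_nonneg _)
        _ = _ := mul_one _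
    · simp only [h, not_false_eq_true, indicator_of_notMem]
      have : η r = 0 := by
        simp only [hη]
        have : ∀ x ∈ uIcc (s - r) (t - r), ψ x = 0 := by
          intro x hx
          rw [uIcc_of_le (by linarith)] at hx
          apply ψz
          rw [le_abs]; right
          simp only [mem_Iio, not_lt] at h
          linarith [hx.2]
        rw [intervalIntegral.integral_congr this]; simp
      simp [this]
  rw [E1, E1]
  linarith

theorem tendsto_small (T : ℝ) (G : ℝ → ℝ) (hG : IntegrableOn G (Ioo 0 T)) :
    Tendsto (fun t => ∫ r in Ioo 0 T ∩ Iio (2 * t), |G r|) (𝓝[>] (0:ℝ)) (𝓝 0) := by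
  have h := Integrable.tendsto_setIntegral_nhds_zero (μ := volume.restrict (Ioo 0 T))
    (f := fun r => |G r|) hG.abs (l := 𝓝[>] (0:ℝ)) (s := fun t => Iio (2 * t)) ?_
  · refine h.congr fun t => ?_
    rw [Measure.restrict_restrict measurableSet_Iio, inter_comm]
  · have h2 : Tendsto (fun t : ℝ => ENNReal.ofReal (2 * t)) (𝓝[>] (0:ℝ)) (𝓝 0) := by
      have : Tendsto (fun t : ℝ => ENNReal.ofReal (2 * t)) (𝓝 (0:ℝ)) (𝓝 (ENNReal.ofReal (2 * 0))) :=
        (ENNReal.continuous_ofReal.comp (by fun_prop : Continuous fun t : ℝ => 2 * t)).tendsto 0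
      simp only [mul_zero, ENNReal.ofReal_zero] at this
      exact this.mono_left nhdsWithin_le_nhds
    refine tendsto_of_tendsto_of_tendsto_of_le_of_le tendsto_const_nhds h2 (fun _ => zero_le) ?_
    intro t
    simp only [Function.comp]
    rw [Measure.restrict_apply measurableSet_Iio]
    calc volume (Iio (2 * t) ∩ Ioo 0 T) ≤ volume (Ioo 0 (2 * t)) :=
          measure_mono fun x hx => ⟨hx.2.1, hx.1⟩
      _ = _ := by simp

theorem ess_neBot : ((𝓝[>] (0:ℝ)) ⊓ ae (volume : Measure ℝ)).NeBot := by
  rw [inf_neBot_iff]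
  intro A hA B hB
  obtain ⟨e, he, hA⟩ := mem_nhdsGT_iff_exists_Ioo_subset.1 hA
  by_contra hne
  rw [not_nonempty_iff_eq_empty] at hne
  have : Ioo 0 e ⊆ Bᶜ := fun x hx hxB => by
    have : x ∈ A ∩ B := ⟨hA hx, hxB⟩
    rw [hne] at this; exact this
  have h0 : volume (Ioo 0 e) = 0 := measure_mono_null this hB
  simp only [mem_Ioi] at he
  simp [Real.volume_Ioo, he.not_ge] at h0

open scoped Convolution in
theorem ess_lim_exists (T : ℝ) (hT : 0 < T) (f G : ℝ → ℝ)
    (hf : IntegrableOn f (Ioo 0 T)) (hG : IntegrableOn G (Ioo 0 T))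
    (hf0 : ∀ t ∈ Ioo 0 T, 0 ≤ f t)
    (H : ∀ η : ℝ → ℝ, Differentiable ℝ η → Continuous (deriv η) → HasCompactSupport η →
      tsupport η ⊆ Ioo 0 T → (∀ t, 0 ≤ η t) →
      0 ≤ ∫ t in Ioo 0 T, (-(f t) * deriv η t + G t * η t)) :
    ∃ L, EssLimInit f L := by
  let b : ℕ → ContDiffBump (0 : ℝ) := fun n =>
    ⟨1 / ((n : ℝ) + 1) / 2, 1 / ((n : ℝ) + 1), by positivity, by
      have : 0 < 1 / ((n : ℝ) + 1) := by positivity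
      linarith⟩
  have hb : Tendsto (fun n => (b n).rOut) atTop (𝓝 0) := tendsto_one_div_add_atTop_nhds_zero_nat
  have hfi : Integrable (indicator (Ioo 0 T) f) := by
    rwa [integrable_indicator_iff measurableSet_Ioo]
  have hae := ContDiffBump.ae_convolution_tendsto_right_of_locallyIntegrable (K := 2) hb
    (Eventually.of_forall fun n => by simp only [b]; linarith) hfi.locallyIntegrable
  set ω : ℝ → ℝ := fun t => ∫ r in Ioo 0 T ∩ Iio (2 * t), |G r| with hω
  set S : Set ℝ := {x | x ∈ Ioo 0 T ∧ Tendsto (fun n => ((b n).normed volume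
    ⋆[ContinuousLinearMap.lsmul ℝ ℝ, volume] (indicator (Ioo 0 T) f)) x) atTop (𝓝 (f x))} with hS
  have hev : ∀ᶠ x in (𝓝[>] (0:ℝ)) ⊓ ae (volume : Measure ℝ), x ∈ S := by
    have h1 : ∀ᶠ x in (𝓝[>] (0:ℝ)), x ∈ Ioo 0 T := Ioo_mem_nhdsGT hT
    filter_upwards [h1.filter_mono inf_le_left, hae.filter_mono inf_le_right] with x hx hx'
    refine ⟨hx, ?_⟩
    rwa [indicator_of_mem hx] at hx'
  have key : ∀ s ∈ S, ∀ t ∈ S, s < t → f s ≤ f t + ω t := by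
    intro s hs t ht hst
    refine le_of_tendsto_of_tendsto hs.2 (ht.2.add_const (ω t)) ?_
    have e1 : ∀ᶠ n in atTop, (b n).rOut < s := hb.eventually (gt_mem_nhds hs.1.1)
    have e2 : ∀ᶠ n in atTop, (b n).rOut < T - t := hb.eventually (gt_mem_nhds (by linarith [ht.1.2]))
    filter_upwards [e1, e2] with n h1 h2
    refine (bump_step T f G hf hG H (b n) s t hst.le (by linarith) (by linarith)).trans ?_
    gcongr
    apply setIntegral_mono_set
    · exact (hG.mono_set inter_subset_left).abs
    · exact Eventually.of_forall fun _ => abs_nonneg _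
    · apply LE.le.eventuallyLE
      apply inter_subset_inter_right
      apply Iio_subset_Iio
      linarith
  have hω0 : ∀ t, 0 ≤ ω t := fun t => integral_nonneg fun _ => abs_nonneg _
  have hωl : Tendsto ω (𝓝[>] (0:ℝ)) (𝓝 0) := tendsto_small T G hG
  have hne : ((𝓝[>] (0:ℝ)) ⊓ ae (volume : Measure ℝ)).NeBot := ess_neBot
  set m : ℝ → ℝ := fun t => f t + ω t with hm
  have hbdd : BddBelow (m '' S) := ⟨0, by
    rintro _ ⟨t, ht, rfl⟩
    exact add_nonneg (hf0 t ht.1) (hω0 t)⟩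
  have hSne : (m '' S).Nonempty := (hev.exists : ∃ x, x ∈ S).imp' m fun x hx => ⟨x, hx, rfl⟩
  refine ⟨sInf (m '' S), ?_⟩
  rw [EssLimInit, Metric.tendsto_nhds]
  intro ε hε
  obtain ⟨_, ⟨t, ht, rfl⟩, htl⟩ := exists_lt_of_csInf_lt hSne (lt_add_of_pos_right (sInf (m '' S)) hε)
  have e1 : ∀ᶠ x in 𝓝[>] (0:ℝ), x < t := mem_nhdsWithin_of_mem_nhds (gt_mem_nhds ht.1.1)
  have e2 : ∀ᶠ x in 𝓝[>] (0:ℝ), ω x < ε := hωl.eventually (gt_mem_nhds hε)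
  filter_upwards [hev, e1.filter_mono inf_le_left, e2.filter_mono inf_le_left] with x hx h1 h2
  have a1 := key x hx t ht h1
  have a2 : sInf (m '' S) ≤ m x := csInf_le hbdd ⟨x, hx, rfl⟩
  simp only [hm] at a2 htl
  rw [Real.dist_eq, abs_lt]
  constructor <;> linarith

theorem QT_restrict {N : ℕ} (Ω : Set (Euc N)) (T : ℝ) :
    (volume : Measure (Euc N × ℝ)).restrict (QT Ω T)
      = (volume.restrict Ω).prod (volume.restrict (Ioo 0 T)) := by
  rw [Measure.prod_restrict, QT, Measure.volume_eq_prod]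

theorem integrable_mul_space {N : ℕ} {Ω : Set (Euc N)} (hΩo : IsOpen Ω)
    (hΩb : Bornology.IsBounded Ω) {T : ℝ} {h : Euc N × ℝ → ℝ} (hh : IntegrableOn h (QT Ω T))
    {c : Euc N → ℝ} (hc : Continuous c) :
    IntegrableOn (fun p => h p * c p.1) (QT Ω T) := by
  obtain ⟨C, hC⟩ := hΩb.isCompact_closure.exists_bound_of_continuousOn hc.continuousOn
  refine Integrable.mul_bdd (c := C) hh
    (by fun_prop : Continuous fun p : Euc N × ℝ => c p.1).aestronglyMeasurable ?_
  refine (ae_restrict_iff' (s := QT Ω T) (hΩo.measurableSet.prod measurableSet_Ioo)).2 ?_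
  exact Eventually.of_forall fun p hp => hC _ (subset_closure hp.1)

theorem integrable_mul_time {N : ℕ} {Ω : Set (Euc N)} {T : ℝ} {A : Euc N × ℝ → ℝ}
    (hA : IntegrableOn A (QT Ω T)) {k : ℝ → ℝ} (hk : Continuous k) (hks : HasCompactSupport k) :
    IntegrableOn (fun p => A p * k p.2) (QT Ω T) := by
  obtain ⟨C, hC⟩ := hks.exists_bound_of_continuous hk
  exact Integrable.mul_bdd (c := C) hA
    (by fun_prop : Continuous fun p : Euc N × ℝ => k p.2).aestronglyMeasurable
    (Eventually.of_forall fun p => hC _)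

theorem slice_integral {N : ℕ} {Ω : Set (Euc N)} {T : ℝ} {A : Euc N × ℝ → ℝ}
    (hA : IntegrableOn A (QT Ω T)) {k : ℝ → ℝ} (hk : Continuous k) (hks : HasCompactSupport k) :
    ∫ p in QT Ω T, A p * k p.2 = ∫ t in Ioo 0 T, (∫ x in Ω, A (x, t)) * k t := by
  have h := integrable_mul_time hA hk hks
  rw [IntegrableOn, QT_restrict] at h
  rw [QT_restrict, integral_prod_symm _ h]
  congr 1; funext t
  exact integral_mul_const (k t) (fun x => A (x, t))

theorem slice_integrable {N : ℕ} {Ω : Set (Euc N)} {T : ℝ} {A : Euc N × ℝ → ℝ}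
    (hA : IntegrableOn A (QT Ω T)) :
    IntegrableOn (fun t => ∫ x in Ω, A (x, t)) (Ioo 0 T) := by
  rw [IntegrableOn, QT_restrict] at hA
  exact hA.integral_prod_right

theorem slice_ae {N : ℕ} {Ω : Set (Euc N)} {T : ℝ} (hT : 0 < T) {A : Euc N × ℝ → ℝ}
    (hA : IntegrableOn A (QT Ω T)) :
    ∀ᶠ t in (𝓝[>] (0:ℝ)) ⊓ ae (volume : Measure ℝ),
      t ∈ Ioo 0 T ∧ IntegrableOn (fun x => A (x, t)) Ω := by
  rw [IntegrableOn, QT_restrict] at hA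
  have h := hA.prod_left_ae
  rw [ae_restrict_iff' measurableSet_Ioo] at h
  have h1 : ∀ᶠ x in (𝓝[>] (0:ℝ)), x ∈ Ioo 0 T := Ioo_mem_nhdsGT hT
  filter_upwards [h1.filter_mono inf_le_left, h.filter_mono inf_le_right] with x hx hx'
  exact ⟨hx, hx' hx⟩

theorem lap_continuous {N : ℕ} {φ : Euc N → ℝ} (hφ : ContDiff ℝ 2 φ) : Continuous (lap φ) := by
  unfold lap
  refine continuous_finsetSum _ fun i _ => ?_
  have h1 : ContDiff ℝ 1 (fun y => fderiv ℝ φ y (EuclideanSpace.single i 1)) :=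
    (hφ.fderiv_right (m := 1) (by norm_num)).clm_apply contDiff_const
  exact (h1.continuous_fderiv (by norm_num)).clm_apply continuous_const

theorem lap_mul_const {N : ℕ} {φ : Euc N → ℝ} (hφ : ContDiff ℝ 2 φ) (c : ℝ) (x : Euc N) :
    lap (fun y => φ y * c) x = lap φ x * c := by
  unfold lap
  rw [Finset.sum_mul]
  refine Finset.sum_congr rfl fun i _ => ?_
  have h1 : ContDiff ℝ 1 (fun y => fderiv ℝ φ y (EuclideanSpace.single i 1)) :=
    (hφ.fderiv_right (m := 1) (by norm_num)).clm_apply contDiff_const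
  have e : (fun y => fderiv ℝ (fun y => φ y * c) y (EuclideanSpace.single i 1))
      = fun y => fderiv ℝ φ y (EuclideanSpace.single i 1) * c := by
    funext y
    rw [fderiv_mul_const (hφ.differentiable (by norm_num) y)]
    simp [mul_comm]
  rw [e, fderiv_mul_const (h1.differentiable (by norm_num) x)]
  simp [mul_comm]

theorem C21_prod {N : ℕ} {φ : Euc N → ℝ} (hφ : ContDiff ℝ 2 φ) {η : ℝ → ℝ}
    (hη : Differentiable ℝ η) (hη' : Continuous (deriv η)) :
    C21 (fun (x : Euc N) (t : ℝ) => φ x * η t) := by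
  have hd : Differentiable ℝ φ := hφ.differentiable (by norm_num)
  have h1 : ContDiff ℝ 1 (fderiv ℝ φ) := hφ.fderiv_right (m := 1) (by norm_num)
  have hd1 : Differentiable ℝ (fderiv ℝ φ) := h1.differentiable (by norm_num)
  have c0 := hφ.continuous
  have c1 := h1.continuous
  have c2 : Continuous (fderiv ℝ (fderiv ℝ φ)) := h1.continuous_fderiv (by norm_num)
  have c3 := hη.continuous
  have e1 : ∀ t : ℝ, (fun x => fderiv ℝ (fun y => φ y * η t) x) = fun x => η t • fderiv ℝ φ x := by
    intro t; funext x
    rw [fderiv_mul_const (hd x)]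
  have e2 : ∀ (t : ℝ) x, fderiv ℝ (fun x => η t • fderiv ℝ φ x) x
      = η t • fderiv ℝ (fderiv ℝ φ) x := fun t x => fderiv_fun_const_smul (hd1 x) (η t)
  refine ⟨by fun_prop, fun x t => (hη t).const_mul _, ?_, fun t x => (hd x).mul_const _, ?_, ?_, ?_⟩
  · have : (fun p : Euc N × ℝ => deriv (fun t => φ p.1 * η t) p.2)
        = fun p => φ p.1 * deriv η p.2 := by
      funext p; rw [deriv_const_mul _ (hη p.2)]
    rw [this]; fun_prop
  · have : (fun p : Euc N × ℝ => fderiv ℝ (fun y => φ y * η p.2) p.1)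
        = fun p => η p.2 • fderiv ℝ φ p.1 := by
      funext p; exact congrFun (e1 p.2) p.1
    rw [this]; fun_prop
  · intro t x
    rw [e1 t]
    exact (hd1 x).const_smul (η t)
  · have : (fun p : Euc N × ℝ => fderiv ℝ (fun y => fderiv ℝ (fun z => φ z * η p.2) y) p.1)
        = fun p => η p.2 • fderiv ℝ (fderiv ℝ φ) p.1 := by
      funext p; rw [e1 p.2, e2]
    rw [this]; fun_prop

theorem ess_lim_smooth {N : ℕ} (Ω : Set (Euc N)) (hΩo : IsOpen Ω)
    (hΩb : Bornology.IsBounded Ω) (T : ℝ) (hT : 0 < T)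
    (g : ℝ → ℝ) (u : Euc N × ℝ → ℝ)
    (hu_int : IntegrableOn u (QT Ω T))
    (hu_nonneg : ∀ p ∈ QT Ω T, 0 ≤ u p)
    (hgu_int : IntegrableOn (fun p => g (u p)) (QT Ω T))
    (hsuper : ∀ ζ : Euc N → ℝ → ℝ, C21 ζ →
      HasCompactSupport (fun p : Euc N × ℝ => ζ p.1 p.2) →
      tsupport (fun p : Euc N × ℝ => ζ p.1 p.2) ⊆ QT Ω T →
      (∀ x t, 0 ≤ ζ x t) →
      0 ≤ ∫ p in QT Ω T,
        (-(u p) * deriv (ζ p.1) p.2 - u p * lap (fun y => ζ y p.2) p.1 + ζ p.1 p.2 * g (u p)))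
    (φ : Euc N → ℝ) (hφ : ContDiff ℝ 2 φ) (hφc : HasCompactSupport φ) (hφs : tsupport φ ⊆ Ω)
    (hφ0 : ∀ x, 0 ≤ φ x) :
    ∃ L, EssLimInit (fun t => ∫ x in Ω, u (x, t) * φ x) L := by
  have hA : IntegrableOn (fun p => u p * φ p.1) (QT Ω T) :=
    integrable_mul_space hΩo hΩb hu_int hφ.continuous
  have hB : IntegrableOn (fun p => g (u p) * φ p.1 - u p * lap φ p.1) (QT Ω T) :=
    (integrable_mul_space hΩo hΩb hgu_int hφ.continuous).sub
      (integrable_mul_space hΩo hΩb hu_int (lap_continuous hφ))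
  refine ess_lim_exists T hT _ (fun t => ∫ x in Ω, (g (u (x,t)) * φ x - u (x,t) * lap φ x))
    (slice_integrable hA) (slice_integrable hB) ?_ ?_
  · intro t ht
    exact setIntegral_nonneg hΩo.measurableSet fun x hx =>
      mul_nonneg (hu_nonneg _ ⟨hx, ht⟩) (hφ0 x)
  · intro η hη hη' hηc hηs hη0
    have hsupp : tsupport (fun p : Euc N × ℝ => φ p.1 * η p.2) ⊆ tsupport φ ×ˢ tsupport η := by
      apply closure_minimal _ ((isClosed_tsupport φ).prod (isClosed_tsupport η))
      intro p hp
      rw [Function.mem_support] at hp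
      exact ⟨subset_closure (left_ne_zero_of_mul hp), subset_closure (right_ne_zero_of_mul hp)⟩
    have key := hsuper (fun x t => φ x * η t) (C21_prod hφ hη hη')
      (HasCompactSupport.of_support_subset_isCompact (hφc.isCompact.prod hηc.isCompact)
        (subset_closure.trans hsupp))
      (hsupp.trans (prod_mono hφs hηs)) (fun x t => mul_nonneg (hφ0 x) (hη0 t))
    have i1 := integrable_mul_time hA hη' hηc.deriv
    have i2 := integrable_mul_time hB hη.continuous hηc
    have e : ∀ p : Euc N × ℝ, (-(u p) * deriv (fun t => φ p.1 * η t) p.2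
        - u p * lap (fun y => φ y * η p.2) p.1 + φ p.1 * η p.2 * g (u p))
        = (g (u p) * φ p.1 - u p * lap φ p.1) * η p.2 - u p * φ p.1 * deriv η p.2 := by
      intro p
      rw [deriv_const_mul _ (hη p.2), lap_mul_const hφ]; ring
    simp only [e] at key
    rw [integral_sub i2 i1, slice_integral hA hη' hηc.deriv,
      slice_integral hB hη.continuous hηc, ← integral_sub] at key
    · refine key.trans_eq ?_
      congr 1; funext t; ring
    · obtain ⟨C, hC⟩ := hηc.exists_bound_of_continuous hη.continuous
      exact Integrable.mul_bdd (slice_integrable hB) hη.continuous.aestronglyMeasurable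
        (Eventually.of_forall hC)
    · obtain ⟨C, hC⟩ := hηc.deriv.exists_bound_of_continuous hη'
      exact Integrable.mul_bdd (slice_integrable hA) hη'.aestronglyMeasurable
        (Eventually.of_forall hC)

theorem exists_cutoff {N : ℕ} {Ω K : Set (Euc N)} (hΩo : IsOpen Ω) (hK : IsCompact K)
    (hKΩ : K ⊆ Ω) : ∃ χ : Euc N → ℝ, ContDiff ℝ 2 χ ∧ HasCompactSupport χ ∧ tsupport χ ⊆ Ω ∧
      (∀ x, 0 ≤ χ x) ∧ ∀ x ∈ K, χ x = 1 := by
  obtain ⟨K', hK', h1, h2⟩ := exists_compact_between hK hΩo hKΩ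
  obtain ⟨χ, hχ, hr, hs, ho⟩ := exists_contMDiff_support_eq_eq_one_iff (n := 2)
    (modelWithCornersSelf ℝ (Euc N)) (isOpen_interior (s := K')) hK.isClosed h1
  have hsub : tsupport χ ⊆ K' := by
    rw [tsupport, hs]
    exact closure_minimal interior_subset hK'.isClosed
  refine ⟨χ, hχ.contDiff, HasCompactSupport.of_support_subset_isCompact hK'
    (subset_closure.trans hsub), hsub.trans h2, fun x => (hr ⟨x, rfl⟩).1, fun x hx => (ho x).1 hx⟩

theorem ess_lim_general {N : ℕ} (Ω : Set (Euc N)) (hΩo : IsOpen Ω)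
    (hΩb : Bornology.IsBounded Ω) (T : ℝ) (hT : 0 < T) (u : Euc N × ℝ → ℝ)
    (hu_int : IntegrableOn u (QT Ω T))
    (hu_nonneg : ∀ p ∈ QT Ω T, 0 ≤ u p)
    (hsm : ∀ φ : Euc N → ℝ, ContDiff ℝ 2 φ → HasCompactSupport φ → tsupport φ ⊆ Ω →
      (∀ x, 0 ≤ φ x) → ∃ L, EssLimInit (fun t => ∫ x in Ω, u (x, t) * φ x) L)
    (φ : Euc N → ℝ) (hφ : Continuous φ) (hφc : HasCompactSupport φ) (hφs : tsupport φ ⊆ Ω) :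
    ∃ L, EssLimInit (fun t => ∫ x in Ω, u (x, t) * φ x) L := by
  have hne := ess_neBot
  obtain ⟨χ, χ2, χc, χs, χ0, χ1⟩ := exists_cutoff hΩo hφc.isCompact hφs
  obtain ⟨Lχ, hLχ⟩ := hsm χ χ2 χc χs χ0
  have sl : ∀ c : Euc N → ℝ, Continuous c →
      ∀ᶠ t in (𝓝[>] (0:ℝ)) ⊓ ae (volume : Measure ℝ),
      t ∈ Ioo 0 T ∧ IntegrableOn (fun x => u (x, t) * c x) Ω := fun c hc =>
    slice_ae hT (integrable_mul_space hΩo hΩb hu_int hc)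
  have approx : ∀ ε > 0, ∃ L, ∀ᶠ t in (𝓝[>] (0:ℝ)) ⊓ ae (volume : Measure ℝ),
      dist (∫ x in Ω, u (x, t) * φ x) L < ε := by
    intro ε hε
    have hL0 : 0 ≤ Lχ := by
      refine ge_of_tendsto hLχ ?_
      filter_upwards [sl χ χ2.continuous] with t ht
      exact setIntegral_nonneg hΩo.measurableSet fun x hx =>
        mul_nonneg (hu_nonneg _ ⟨hx, ht.1⟩) (χ0 x)
    set δ : ℝ := ε / (2 * (Lχ + 1)) with hδ
    have hδ0 : 0 < δ := by positivity
    obtain ⟨ψ, ψ2, ψd, ψs⟩ := hφ.exists_contDiff_approx 2 (ε := fun _ => δ) continuous_const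
      (fun _ => hδ0)
    have ψ2 : ContDiff ℝ 2 ψ := ψ2
    have ψts : tsupport ψ ⊆ tsupport φ := closure_mono ψs
    have ψc : HasCompactSupport ψ := HasCompactSupport.of_support_subset_isCompact hφc.isCompact
      (subset_closure.trans ψts)
    obtain ⟨M, hM⟩ := ψc.exists_bound_of_continuous ψ2.continuous
    have hpos : ∀ x, 0 ≤ ψ x + M * χ x := by
      intro x
      by_cases hx : x ∈ tsupport φ
      · rw [χ1 x hx]
        have := (abs_le.1 (hM x)).1
        linarith
      · have : ψ x = 0 := image_eq_zero_of_notMem_tsupport fun h => hx (ψts h)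
        rw [this, zero_add]
        exact mul_nonneg ((norm_nonneg _).trans (hM 0)) (χ0 x)
    have hsub : tsupport (fun x => ψ x + M * χ x) ⊆ tsupport φ ∪ tsupport χ := by
      apply closure_minimal _ ((isClosed_tsupport φ).union (isClosed_tsupport χ))
      intro x hx
      by_contra h
      rw [mem_union, not_or] at h
      apply hx
      have h1 : ψ x = 0 := image_eq_zero_of_notMem_tsupport fun h' => h.1 (ψts h')
      have h2 : χ x = 0 := image_eq_zero_of_notMem_tsupport h.2
      simp [h1, h2]
    obtain ⟨L1, hL1⟩ := hsm (fun x => ψ x + M * χ x) (ψ2.add (contDiff_const.mul χ2))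
      (HasCompactSupport.of_support_subset_isCompact (hφc.isCompact.union χc.isCompact)
        (subset_closure.trans hsub)) (hsub.trans (union_subset hφs χs)) hpos
    refine ⟨L1 - M * Lχ, ?_⟩
    have hlim := Tendsto.sub hL1 (Tendsto.const_mul M hLχ)
    have e1 := (Metric.tendsto_nhds.1 hlim) (ε / 2) (by positivity)
    have e2 : ∀ᶠ t in (𝓝[>] (0:ℝ)) ⊓ ae (volume : Measure ℝ),
      (∫ x in Ω, u (x, t) * χ x) < Lχ + 1 := hLχ.eventually (gt_mem_nhds (by linarith))
    filter_upwards [e1, e2, sl φ hφ, sl χ χ2.continuous, sl ψ ψ2.continuous] with t h1 h2 h3 h4 h5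
    have q : (∫ x in Ω, u (x, t) * (ψ x + M * χ x)) - M * ∫ x in Ω, u (x, t) * χ x
        = ∫ x in Ω, u (x, t) * ψ x := by
      have : IntegrableOn (fun x => M * (u (x, t) * χ x)) Ω := h4.2.const_mul M
      rw [← integral_const_mul, sub_eq_iff_eq_add, ← integral_add h5.2 this]
      congr 1; funext x; ring
    rw [q] at h1
    have r : dist (∫ x in Ω, u (x, t) * φ x) (∫ x in Ω, u (x, t) * ψ x)
        ≤ δ * ∫ x in Ω, u (x, t) * χ x := by
      rw [Real.dist_eq, ← integral_sub h3.2 h5.2, ← integral_const_mul]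
      refine (abs_integral_le_integral_abs).trans ?_
      refine setIntegral_mono_on (h3.2.sub h5.2).abs (h4.2.const_mul δ) hΩo.measurableSet ?_
      intro x hx
      have u0 := hu_nonneg (x, t) ⟨hx, h3.1⟩
      rw [← mul_sub, abs_mul, abs_of_nonneg u0]
      have : |φ x - ψ x| ≤ δ * χ x := by
        by_cases hx : x ∈ tsupport φ
        · rw [χ1 x hx, mul_one, abs_sub_comm]
          exact (ψd x).le
        · rw [image_eq_zero_of_notMem_tsupport hx,
            image_eq_zero_of_notMem_tsupport fun h => hx (ψts h)]
          simp only [sub_self, abs_zero]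
          exact mul_nonneg hδ0.le (χ0 x)
      calc u (x, t) * |φ x - ψ x| ≤ u (x, t) * (δ * χ x) := mul_le_mul_of_nonneg_left this u0
        _ = _ := by ring
    have r2 : δ * ∫ x in Ω, u (x, t) * χ x ≤ ε / 2 := by
      calc δ * ∫ x in Ω, u (x, t) * χ x ≤ δ * (Lχ + 1) := by gcongr
        _ = ε / 2 := by rw [hδ]; field_simp
    calc dist (∫ x in Ω, u (x, t) * φ x) (L1 - M * Lχ) ≤ _ := dist_triangle _ _ _
      _ < ε / 2 + ε / 2 := add_lt_add_of_le_of_lt (r.trans r2) h1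
      _ = ε := by ring
  have : Cauchy (map (fun t => ∫ x in Ω, u (x, t) * φ x)
      ((𝓝[>] (0:ℝ)) ⊓ ae (volume : Measure ℝ))) := by
    rw [Metric.cauchy_iff]
    refine ⟨inferInstance, fun ε hε => ?_⟩
    obtain ⟨L, hL⟩ := approx (ε / 2) (by positivity)
    refine ⟨Metric.ball L (ε / 2), hL, fun x hx y hy => ?_⟩
    calc dist x y ≤ dist x L + dist y L := dist_triangle_right _ _ _
      _ < ε / 2 + ε / 2 := add_lt_add hx hy
      _ = ε := by ring
  exact CompleteSpace.complete this

theorem trace_of_lim {N : ℕ} (Ω : Set (Euc N)) (hΩo : IsOpen Ω)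
    (hΩb : Bornology.IsBounded Ω) (T : ℝ) (hT : 0 < T) (u : Euc N × ℝ → ℝ)
    (hu_int : IntegrableOn u (QT Ω T))
    (hu_nonneg : ∀ p ∈ QT Ω T, 0 ≤ u p)
    (hlim : ∀ φ : Euc N → ℝ, Continuous φ → HasCompactSupport φ → tsupport φ ⊆ Ω →
      ∃ L, EssLimInit (fun t => ∫ x in Ω, u (x, t) * φ x) L) :
    ∃ ν : Measure (Euc N), RadonOn Ω ν ∧ InitTraceOn Ω Ω u ν := by
  have hne := ess_neBot
  have : LocallyCompactSpace Ω := hΩo.locallyCompactSpace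
  let E : CompactlySupportedContinuousMap Ω ℝ → Euc N → ℝ := fun f => Function.extend Subtype.val f 0
  have Ec : ∀ f, Continuous (E f) := fun f =>
    HasCompactSupport.continuous_extend_zero hΩo f.continuous f.hasCompactSupport
  have Es : ∀ f, HasCompactSupport (E f) := fun f =>
    f.hasCompactSupport.extend_zero continuous_subtype_val
  have Et : ∀ f, tsupport (E f) ⊆ Ω := fun f =>
    (f.hasCompactSupport.tsupport_extend_zero_subset continuous_subtype_val).trans
      (Subtype.coe_image_subset _ _)
  have Ev : ∀ f x (hx : x ∈ Ω), E f x = f ⟨x, hx⟩ := fun f x hx =>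
    Subtype.val_injective.extend_apply f 0 ⟨x, hx⟩
  have sl : ∀ c : Euc N → ℝ, Continuous c →
      ∀ᶠ t in (𝓝[>] (0:ℝ)) ⊓ ae (volume : Measure ℝ),
      t ∈ Ioo 0 T ∧ IntegrableOn (fun x => u (x, t) * c x) Ω := fun c hc =>
    slice_ae hT (integrable_mul_space hΩo hΩb hu_int hc)
  choose Λ hΛ using fun f => hlim (E f) (Ec f) (Es f) (Et f)
  let Λl : CompactlySupportedContinuousMap Ω ℝ →ₗ[ℝ] ℝ :=
    { toFun := Λ
      map_add' := by
        intro f h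
        refine tendsto_nhds_unique (hΛ (f + h)) ((Tendsto.add (hΛ f) (hΛ h)).congr' ?_)
        filter_upwards [sl _ (Ec f), sl _ (Ec h)] with t h1 h2
        rw [← integral_add h1.2 h2.2]
        refine setIntegral_congr_fun hΩo.measurableSet fun x hx => ?_
        simp only [Ev _ x hx, CompactlySupportedContinuousMap.add_apply]
        ring
      map_smul' := by
        intro c f
        refine tendsto_nhds_unique (hΛ (c • f)) ((Tendsto.const_mul c (hΛ f)).congr ?_)
        intro t
        rw [← integral_const_mul]
        refine setIntegral_congr_fun hΩo.measurableSet fun x hx => ?_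
        simp only [Ev _ x hx, CompactlySupportedContinuousMap.smul_apply, smul_eq_mul]
        ring }
  let Λp : CompactlySupportedContinuousMap Ω ℝ →ₚ[ℝ] ℝ := PositiveLinearMap.mk₀ Λl (by
    intro f hf
    refine ge_of_tendsto (hΛ f) ?_
    filter_upwards [sl _ (Ec f)] with t ht
    refine setIntegral_nonneg hΩo.measurableSet fun x hx =>
        mul_nonneg (hu_nonneg _ ⟨hx, ht.1⟩) ?_
    rw [Ev f x hx]
    exact hf ⟨x, hx⟩)
  let μ : Measure Ω := RealRMK.rieszMeasure Λp
  have hemb : MeasurableEmbedding (Subtype.val : Ω → Euc N) :=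
    MeasurableEmbedding.subtype_coe hΩo.measurableSet
  refine ⟨μ.map Subtype.val, ⟨?_, ?_⟩, ?_⟩
  · rw [hemb.map_apply]
    simp
  · intro K hK hKc
    rw [hemb.map_apply]
    have : IsCompact ((Subtype.val : Ω → Euc N) ⁻¹' K) := by
      rw [Subtype.isCompact_iff, Subtype.image_preimage_coe, inter_eq_right.2 hK]
      exact hKc
    exact this.measure_lt_top
  · intro φ hφ hφc hφs
    let f : CompactlySupportedContinuousMap Ω ℝ :=
      { toFun := fun x => φ x
        continuous_toFun := hφ.comp continuous_subtype_val
        hasCompactSupport' := by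
          refine HasCompactSupport.of_support_subset_isCompact
            (K := (Subtype.val : Ω → Euc N) ⁻¹' tsupport φ) ?_ ?_
          · rw [Subtype.isCompact_iff, Subtype.image_preimage_coe, inter_eq_right.2 hφs]
            exact hφc
          · intro x hx
            exact subset_closure (s := Function.support φ) hx }
    have hf : ∫ x, φ x ∂(μ.map Subtype.val) = Λ f := by
      rw [hemb.integral_map]
      exact RealRMK.integral_rieszMeasure Λp f
    rw [hf]
    refine (hΛ f).congr fun t => ?_
    refine setIntegral_congr_fun hΩo.measurableSet fun x hx => ?_
    simp only [Ev _ x hx]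
    rfl

/-- **Proposition 2.6.** A nonnegative `L¹` supersolution of
`∂_t u − Δu + g(u) = 0` in `Q_T` with `g∘u ∈ L¹(Q_T)` admits an initial trace
which is a positive Radon measure on `Ω`. -/
theorem stmt_1 {N : ℕ} (hN : 1 ≤ N) (Ω : Set (Euc N)) (hΩo : IsOpen Ω)
    (hΩc : IsConnected Ω) (hΩb : Bornology.IsBounded Ω) (T : ℝ) (hT : 0 < T)
    (g : ℝ → ℝ) (hg : GoodG g) (u : Euc N × ℝ → ℝ)
    (hu_int : IntegrableOn u (QT Ω T))
    (hu_nonneg : ∀ p ∈ QT Ω T, 0 ≤ u p)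
    (hgu_int : IntegrableOn (fun p => g (u p)) (QT Ω T))
    (hsuper : ∀ ζ : Euc N → ℝ → ℝ, C21 ζ →
      HasCompactSupport (fun p : Euc N × ℝ => ζ p.1 p.2) →
      tsupport (fun p : Euc N × ℝ => ζ p.1 p.2) ⊆ QT Ω T →
      (∀ x t, 0 ≤ ζ x t) →
      0 ≤ ∫ p in QT Ω T,
        (-(u p) * deriv (ζ p.1) p.2 - u p * lap (fun y => ζ y p.2) p.1 + ζ p.1 p.2 * g (u p))) :
    ∃ ν : Measure (Euc N), RadonOn Ω ν ∧ InitTraceOn Ω Ω u ν := by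
  exact trace_of_lim Ω hΩo hΩb T hT u hu_int hu_nonneg
    (ess_lim_general Ω hΩo hΩb T hT u hu_int hu_nonneg
      (ess_lim_smooth Ω hΩo hΩb T hT g u hu_int hu_nonneg hgu_int hsuper))
end
end
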